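/- arXiv:math/0402353 — 10 statements merged into one kernel-verified Lean document; each statement's English description precedes it below -/
import Mathlib

section
/- A proper geodesic metric space X is exponentially bounded if and only if it is tempered, i.e., if and only if X carries a tempered Radon measure that is invariant under every bijective isometry of X. -/
/-!
**From a tempered measure to an exponential bound.** Let the `r`-balls have measure at least `c`,
and the `r`- and `4r`-balls measure at most `D`. In a geodesic space, covering by `4r`-balls around
a `2r`-net of a slightly smaller ball gives `c * m (B(x, R + r)) ≤ D * m (B(x, R))` for `R ≥ r`
(`growth_step`). So the measure of `B(x, R)` grows at most exponentially in `R`, and hence so does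
the number of disjoint `r`-balls inside it (`expBounded_of_tempered`).

**From an exponential bound to a tempered measure.** Only the following consequence is used: a
`δ`-separated set in a ball of radius `R` has at most `N R` points, where `δ = 2ρ`
(`PackingBound`). Choose a maximal family of isometry orbits that are pairwise more than `δ` apart.
Each orbit carries an invariant measure, obtained as in the construction of Haar measure: count
`e`-balls needed to cover a compact set, divide by the number needed for a `δ`-ball of the orbit,
and let `e` tend to `0` along an ultrafilter. Working with covering numbers on `X` itself avoids
topologising the isometry group, and the sum over orbits can be taken before the limit
(`weight`, `limWeight`). The result is an invariant content on compact sets, hence an invariant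
Radon measure. It gives `B(x, R)` mass at most `N R * N R`: at most `N R` orbits meet the ball
(`weight_closedBall_le`), and on each of them `N R` balls of radius `δ` and mass `1` cover the
intersection (`cov_orbit_le`). Every point is within `δ` of a chosen orbit, so balls of radius at
least `2δ` have mass at least `1` (`one_le_weight_closedBall`).
-/

open MeasureTheory Metric Set ENNReal

/-- A geodesic metric space: any two points are joined by a geodesic segment
(an isometric image of a real interval). -/
def IsGeodesicSpace (X : Type*) [MetricSpace X] : Prop :=
  ∀ x y : X, ∃ f : ℝ → X, f 0 = x ∧ f (dist x y) = y ∧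
    ∀ s ∈ Set.Icc (0 : ℝ) (dist x y), ∀ t ∈ Set.Icc (0 : ℝ) (dist x y),
      dist (f s) (f t) = |s - t|

/-- `X` is exponentially `ρ`-bounded: there is a constant `a` such that for every `x`
and every `r > 0` the ball `B(x,r)` contains at most `a ^ r` pairwise disjoint balls
of radius `ρ`. -/
def ExpBounded (X : Type*) [MetricSpace X] (ρ : ℝ) : Prop :=
  ∃ a : ℝ, 0 < a ∧ ∀ (x : X) (r : ℝ), 0 < r →
    ∀ s : Finset X,
      ((s : Set X).Pairwise fun y z => Disjoint (closedBall y ρ) (closedBall z ρ)) →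
      (∀ y ∈ s, closedBall y ρ ⊆ closedBall x r) →
      (s.card : ℝ) ≤ a ^ r

/-- `m` is tempered on a set `I` of radii: for every `r ∈ I` the measures of closed
`r`-balls are uniformly bounded from above and bounded away from `0`. -/
def TemperedOn {X : Type*} [MetricSpace X] [MeasurableSpace X]
    (m : Measure X) (I : Set ℝ) : Prop :=
  ∀ r ∈ I, ∃ c C : ℝ≥0∞, 0 < c ∧ c ≤ C ∧ C < ⊤ ∧
    ∀ x : X, c ≤ m (closedBall x r) ∧ m (closedBall x r) ≤ C

/-- Radon measure: a locally finite Borel measure which is inner regular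
with respect to compact sets. -/
def IsRadon {X : Type*} [TopologicalSpace X] [MeasurableSpace X] (m : Measure X) : Prop :=
  IsLocallyFiniteMeasure m ∧ m.InnerRegular

namespace ExpTempered

open Filter Topology TopologicalSpace

open scoped NNReal

variable {X : Type*} [MetricSpace X]

/-! ### Covering numbers -/

/-- The least number of closed `e`-balls of `X` covering `T` (with centres anywhere in `X`), as an
extended nonnegative real. -/
noncomputable def cov (e : ℝ≥0) (T : Set X) : ℝ≥0∞ := (externalCoveringNumber e T : ℝ≥0∞)

theorem exists_cover (e : ℝ≥0) (T : Set X) :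
    ∃ C : Set X, IsCover e T C ∧ C.encard = externalCoveringNumber e T := by
  have : Nonempty {C : Set X // IsCover e T C} := ⟨⟨T, IsCover.rfl⟩⟩
  obtain ⟨C, hC⟩ := ENat.exists_eq_iInf
    (fun C : {C : Set X // IsCover e T C} => (C : Set X).encard)
  refine ⟨C, C.2, ?_⟩
  rw [hC, externalCoveringNumber, iInf_subtype]

theorem cov_mono (e : ℝ≥0) {S T : Set X} (h : S ⊆ T) : cov e S ≤ cov e T :=
  ENat.toENNReal_mono (externalCoveringNumber_mono_set h)

theorem cov_union_le (e : ℝ≥0) (S T : Set X) : cov e (S ∪ T) ≤ cov e S + cov e T := by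
  obtain ⟨C, hC, hC'⟩ := exists_cover e S
  obtain ⟨D, hD, hD'⟩ := exists_cover e T
  rw [cov, cov, cov, ← hC', ← hD', ← ENat.toENNReal_add]
  refine ENat.toENNReal_mono (le_trans (IsCover.externalCoveringNumber_le_encard (C := C ∪ D) ?_)
    (encard_union_le C D))
  rintro x (hx | hx)
  · obtain ⟨c, hc, h⟩ := hC hx
    exact ⟨c, Or.inl hc, h⟩
  · obtain ⟨c, hc, h⟩ := hD hx
    exact ⟨c, Or.inr hc, h⟩

theorem cov_biUnion_le {ι : Type*} (e : ℝ≥0) (P : Finset ι) (S : ι → Set X) :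
    cov e (⋃ p ∈ P, S p) ≤ ∑ p ∈ P, cov e (S p) := by
  classical
  induction P using Finset.induction with
  | empty => simp [cov]
  | insert a s ha ih =>
    rw [Finset.set_biUnion_insert, Finset.sum_insert ha]
    exact (cov_union_le _ _ _).trans (by gcongr)

/-- Covering numbers are superadditive on sets at distance more than `2e`, since no ball of
radius `e` meets both. -/
theorem cov_add_le (e : ℝ≥0) {S T : Set X} (h : ∀ x ∈ S, ∀ y ∈ T, 2 * (e : ℝ) < dist x y) :
    cov e S + cov e T ≤ cov e (S ∪ T) := by
  obtain ⟨C, hC, hC'⟩ := exists_cover e (S ∪ T)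
  rw [isCover_iff_subset_iUnion_closedBall] at hC
  rw [cov, cov, cov, ← hC', ← ENat.toENNReal_add]
  refine ENat.toENNReal_mono ?_
  let A := {c ∈ C | ∃ x ∈ S, dist x c ≤ e}
  let B := {c ∈ C | ∃ x ∈ T, dist x c ≤ e}
  have hA : IsCover e S A := by
    rw [isCover_iff_subset_iUnion_closedBall]
    intro x hx
    obtain ⟨c, hc, hxc⟩ := mem_iUnion₂.1 (hC (Or.inl hx))
    exact mem_iUnion₂.2 ⟨c, ⟨hc, x, hx, hxc⟩, hxc⟩
  have hB : IsCover e T B := by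
    rw [isCover_iff_subset_iUnion_closedBall]
    intro x hx
    obtain ⟨c, hc, hxc⟩ := mem_iUnion₂.1 (hC (Or.inr hx))
    exact mem_iUnion₂.2 ⟨c, ⟨hc, x, hx, hxc⟩, hxc⟩
  have hAB : Disjoint A B := by
    rw [Set.disjoint_left]
    rintro c ⟨-, x, hx, hxc⟩ ⟨-, y, hy, hyc⟩
    have := h x hx y hy
    have := dist_triangle_right x y c
    linarith
  calc externalCoveringNumber e S + externalCoveringNumber e T
      ≤ A.encard + B.encard :=
        add_le_add hA.externalCoveringNumber_le_encard hB.externalCoveringNumber_le_encard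
    _ = (A ∪ B).encard := (encard_union_eq hAB).symm
    _ ≤ C.encard := encard_le_encard (union_subset (sep_subset _ _) (sep_subset _ _))

theorem cov_image_le (e : ℝ≥0) (g : X ≃ᵢ X) (T : Set X) : cov e (g '' T) ≤ cov e T := by
  obtain ⟨C, hC, hC'⟩ := exists_cover e T
  rw [cov, cov, ← hC']
  refine ENat.toENNReal_mono (le_trans (IsCover.externalCoveringNumber_le_encard (C := g '' C) ?_)
    (encard_image_le _ _))
  exact (g.isometry.isCover_image_iff C).2 hC

theorem cov_image (e : ℝ≥0) (g : X ≃ᵢ X) (T : Set X) : cov e (g '' T) = cov e T := by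
  refine le_antisymm (cov_image_le e g T) ?_
  have := cov_image_le e g.symm (g '' T)
  rwa [← image_comp, show (⇑g.symm ∘ ⇑g) = id from funext g.symm_apply_apply, image_id] at this

theorem extCov_ne_top [ProperSpace X] {e : ℝ≥0} (he : e ≠ 0) {T : Set X} {x : X} {R : ℝ}
    (hT : T ⊆ closedBall x R) : externalCoveringNumber e T ≠ ⊤ := by
  obtain ⟨N, -, hN, hc⟩ := exists_finite_isCover_of_isCompact he (isCompact_closedBall x R)
  exact ((hc.anti hT).externalCoveringNumber_le_encard.trans_lt hN.encard_lt_top).ne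

theorem cov_ne_top [ProperSpace X] {e : ℝ≥0} (he : e ≠ 0) {T : Set X} {x : X} {R : ℝ}
    (hT : T ⊆ closedBall x R) : cov e T ≠ ⊤ := by
  simpa [cov] using extCov_ne_top he hT

theorem cov_ne_zero (e : ℝ≥0) {T : Set X} (hT : T.Nonempty) : cov e T ≠ 0 := by
  simpa [cov, ← nonempty_iff_ne_empty] using hT

/-- A bounded set contains a finite `δ`-separated set which is also a `δ`-cover. -/
theorem exists_net [ProperSpace X] {δ : ℝ} (hδ : 0 < δ) {T : Set X} {x : X} {R : ℝ}
    (hT : T ⊆ closedBall x R) :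
    ∃ P : Finset X, (P : Set X) ⊆ T ∧ (P : Set X).Pairwise (fun y z => δ < dist y z) ∧
      ∀ t ∈ T, ∃ p ∈ P, dist t p ≤ δ := by
  lift δ to ℝ≥0 using hδ.le
  have h2 : δ / 2 ≠ 0 := by
    have : (0 : ℝ≥0) < δ := by exact_mod_cast hδ
    positivity
  have hp : packingNumber δ T ≠ ⊤ := by
    have := packingNumber_two_mul_le_externalCoveringNumber (δ / 2) T
    rw [mul_div_cancel₀ _ (two_ne_zero)] at this
    exact (this.trans_lt (extCov_ne_top h2 hT).lt_top).ne
  obtain ⟨hs, hc⟩ := And.intro (isSeparated_maximalSeparatedSet (ε := δ) (A := T))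
    (isCover_maximalSeparatedSet hp)
  have hf : (maximalSeparatedSet δ T).Finite :=
    Set.encard_ne_top_iff.1 (by rwa [encard_maximalSeparatedSet hp])
  refine ⟨hf.toFinset, by simpa using maximalSeparatedSet_subset, ?_, ?_⟩
  · rw [hf.coe_toFinset]
    intro y hy z hz hyz
    have : (δ : ℝ≥0∞) < edist y z := hs hy hz hyz
    rw [edist_nndist] at this
    exact_mod_cast this
  · intro t ht
    rw [isCover_iff_subset_iUnion_closedBall] at hc
    obtain ⟨p, hp, h⟩ := mem_iUnion₂.1 (hc ht)
    exact ⟨p, by simpa using hp, h⟩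

/-- A bound, uniform over the centre, on the cardinality of a `δ`-separated finite set
contained in a ball of radius `R`. -/
def PackingBound (X : Type*) [MetricSpace X] (δ : ℝ) (N : ℝ → ℕ) : Prop :=
  ∀ (x : X) (R : ℝ) (s : Finset X), (s : Set X).Pairwise (fun y z => δ < dist y z) →
    (s : Set X) ⊆ closedBall x R → s.card ≤ N R

theorem ExpBounded.packingBound {ρ : ℝ} (hρ : 0 < ρ) (h : ExpBounded X ρ) :
    ∃ N : ℝ → ℕ, PackingBound X (2 * ρ) N := by
  obtain ⟨a, -, h⟩ := h
  refine ⟨fun R => ⌊a ^ (R + ρ)⌋₊, fun x R s hs hsR => ?_⟩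
  rcases s.eq_empty_or_nonempty with rfl | ⟨y, hy⟩
  · simp
  have hR : 0 ≤ R := dist_nonneg.trans (mem_closedBall.1 (hsR hy))
  refine Nat.le_floor (h x (R + ρ) (by linarith) s ?_ ?_)
  · intro y hy z hz hyz
    exact closedBall_disjoint_closedBall (by linarith [hs hy hz hyz])
  · intro z hz
    exact closedBall_subset_closedBall' (by linarith [mem_closedBall.1 (hsR hz)])

/-! ### Weights from covering numbers of orbits -/

/-- The orbit of `x` under the group of bijective isometries. -/
def orb (x : X) : Set X := Set.range fun g : X ≃ᵢ X => g x

theorem image_orb (g : X ≃ᵢ X) (x : X) : g '' orb x = orb x := by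
  ext y
  constructor
  · rintro ⟨_, ⟨h, rfl⟩, rfl⟩
    exact ⟨h.trans g, rfl⟩
  · rintro ⟨h, rfl⟩
    exact ⟨g.symm (h x), ⟨h.trans g.symm, rfl⟩, g.apply_symm_apply _⟩

theorem image_ball_orb (g : X ≃ᵢ X) (x y : X) (R : ℝ) :
    g '' (closedBall y R ∩ orb x) = closedBall (g y) R ∩ orb x := by
  rw [image_inter g.injective, image_orb, g.image_closedBall]

/-- There is a maximal family of orbit representatives whose orbits are pairwise more than `δ`
apart; by maximality every point of `X` is within `δ` of one of these orbits. -/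
theorem exists_orbit_net (X : Type*) [MetricSpace X] (δ : ℝ) (hδ : 0 ≤ δ) : ∃ A : Set X,
    (A.Pairwise fun x y => ∀ g : X ≃ᵢ X, δ < dist (g x) y) ∧
      ∀ y, ∃ x ∈ A, ∃ g : X ≃ᵢ X, dist (g x) y ≤ δ := by
  obtain ⟨A, hA⟩ := zorn_subset
    {A : Set X | A.Pairwise fun x y => ∀ g : X ≃ᵢ X, δ < dist (g x) y} (by
      intro c hc hchain
      exact ⟨⋃₀ c, (pairwise_sUnion hchain.directedOn).2 hc, fun s hs => subset_sUnion_of_mem hs⟩)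
  refine ⟨A, hA.prop, fun y => ?_⟩
  by_contra! hcon
  have hmem : insert y A ∈ {A : Set X | A.Pairwise fun x y => ∀ g : X ≃ᵢ X, δ < dist (g x) y} := by
    refine hA.prop.insert fun b hb _ => ⟨fun g => ?_, hcon b hb⟩
    have := hcon b hb g.symm
    rwa [← g.dist_eq, g.apply_symm_apply, dist_comm] at this
  have hy : y ∈ A := hA.le_of_ge hmem (subset_insert y A) (mem_insert y A)
  have := hcon y hy (IsometryEquiv.refl X)
  rw [show IsometryEquiv.refl X y = y from rfl, dist_self] at this
  linarith

/-- The approximate measure of `T` at scale `e`: the part of `T` on each chosen orbit is counted by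
its `e`-covering number, normalised so that a `δ`-ball of the orbit centred on it has weight `1`. -/
noncomputable def weight (A : Set X) (δ : ℝ) (e : ℝ≥0) (T : Set X) : ℝ≥0∞ :=
  ∑' x : A, cov e (T ∩ orb (x : X)) / cov e (closedBall (x : X) δ ∩ orb (x : X))

section Weight

variable {A : Set X} {δ : ℝ} {N : ℝ → ℕ} {e : ℝ≥0}

theorem weight_mono (A : Set X) (δ : ℝ) (e : ℝ≥0) {S T : Set X} (h : S ⊆ T) :
    weight A δ e S ≤ weight A δ e T :=
  ENNReal.tsum_le_tsum fun _ =>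
    ENNReal.div_le_div_right (cov_mono e (inter_subset_inter_left _ h)) _

theorem weight_union_le (A : Set X) (δ : ℝ) (e : ℝ≥0) (S T : Set X) :
    weight A δ e (S ∪ T) ≤ weight A δ e S + weight A δ e T := by
  rw [weight, weight, weight, ← ENNReal.tsum_add]
  refine ENNReal.tsum_le_tsum fun _ => ?_
  rw [← ENNReal.add_div, union_inter_distrib_right]
  exact ENNReal.div_le_div_right (cov_union_le _ _ _) _

theorem weight_add_le (A : Set X) (δ : ℝ) {S T : Set X}
    (h : ∀ x ∈ S, ∀ y ∈ T, 2 * (e : ℝ) < dist x y) :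
    weight A δ e S + weight A δ e T ≤ weight A δ e (S ∪ T) := by
  rw [weight, weight, weight, ← ENNReal.tsum_add]
  refine ENNReal.tsum_le_tsum fun x => ?_
  rw [← ENNReal.add_div, union_inter_distrib_right]
  exact ENNReal.div_le_div_right (cov_add_le _ fun x hx y hy => h x hx.1 y hy.1) _

theorem weight_image (A : Set X) (δ : ℝ) (e : ℝ≥0) (g : X ≃ᵢ X) (T : Set X) :
    weight A δ e (g '' T) = weight A δ e T := by
  refine tsum_congr fun x => ?_
  rw [← cov_image e g (T ∩ _), image_inter g.injective, image_orb]

/-- Translating a `δ`-net of `closedBall z R ∩ orb x` by isometries compares its covering number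
with that of one `δ`-ball of the orbit, with a constant which does not depend on the scale. -/
theorem cov_orbit_le [ProperSpace X] (hδ : 0 < δ) (hN : PackingBound X δ N) (e : ℝ≥0) (x z : X)
    (R : ℝ) :
    cov e (closedBall z R ∩ orb x) ≤ N R * cov e (closedBall x δ ∩ orb x) := by
  obtain ⟨P, hPT, hPs, hPc⟩ := exists_net hδ (inter_subset_left : closedBall z R ∩ orb x ⊆ _)
  calc cov e (closedBall z R ∩ orb x)
      ≤ cov e (⋃ p ∈ P, closedBall p δ ∩ orb x) := by
        refine cov_mono e fun t ht => ?_
        obtain ⟨p, hp, h⟩ := hPc t ht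
        exact mem_iUnion₂.2 ⟨p, hp, h, ht.2⟩
    _ ≤ ∑ p ∈ P, cov e (closedBall p δ ∩ orb x) := cov_biUnion_le _ _ _
    _ = ∑ p ∈ P, cov e (closedBall x δ ∩ orb x) := by
        refine Finset.sum_congr rfl fun p hp => ?_
        obtain ⟨g, rfl⟩ := (hPT hp).2
        rw [← image_ball_orb, cov_image]
    _ = P.card * cov e (closedBall x δ ∩ orb x) := by simp
    _ ≤ N R * cov e (closedBall x δ ∩ orb x) := by
        gcongr
        exact hN z R P hPs (hPT.trans inter_subset_left)

theorem den_ne_zero (hδ : 0 ≤ δ) (e : ℝ≥0) (x : X) : cov e (closedBall x δ ∩ orb x) ≠ 0 :=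
  cov_ne_zero e ⟨x, mem_closedBall_self hδ, IsometryEquiv.refl X, rfl⟩

/-- Points of distinct chosen orbits are more than `δ` apart, so at most `N R` of these orbits meet
the ball, and each contributes at most `N R`. -/
theorem weight_closedBall_le [ProperSpace X] (hδ : 0 < δ) (hN : PackingBound X δ N)
    (hA : A.Pairwise fun x y => ∀ g : X ≃ᵢ X, δ < dist (g x) y) (z : X) (R : ℝ) :
    weight A δ e (closedBall z R) ≤ N R * N R := by
  classical
  rw [weight, ENNReal.tsum_eq_iSup_sum]
  refine iSup_le fun F => ?_
  have hterm : ∀ x : A, cov e (closedBall z R ∩ orb (x : X)) /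
      cov e (closedBall (x : X) δ ∩ orb (x : X)) ≤ N R := fun x =>
    ENNReal.div_le_of_le_mul (cov_orbit_le hδ hN e x z R)
  let F' : Finset A := F.filter fun x : A => (closedBall z R ∩ orb (x : X)).Nonempty
  have hF' : ∀ x : A, x ∈ F' → ∃ g : X ≃ᵢ X, g (x : X) ∈ closedBall z R := by
    intro x hx
    obtain ⟨_, hy, g, rfl⟩ := (Finset.mem_filter.1 hx).2
    exact ⟨g, hy⟩
  choose! g hg using hF'
  have hdist : ∀ x : A, x ∈ F' → ∀ y : A, y ∈ F' → x ≠ y → δ < dist (g x (x : X)) (g y (y : X)) := by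
    intro x _ y _ hxy
    have := hA x.2 y.2 (fun h => hxy (Subtype.ext h)) ((g x).trans (g y).symm)
    rwa [IsometryEquiv.trans_apply, ← (g y).dist_eq, IsometryEquiv.apply_symm_apply] at this
  have hinj : Set.InjOn (fun x : A => g x (x : X)) (F' : Set A) := by
    intro x hx y hy hxy
    by_contra hne
    have := hdist x hx y hy hne
    simp only at hxy
    rw [hxy, dist_self] at this
    linarith
  have hcard : F'.card ≤ N R := by
    rw [← Finset.card_image_of_injOn hinj]
    refine hN z R _ ?_ ?_
    · intro u hu v hv huv
      obtain ⟨x, hx, rfl⟩ := Finset.mem_image.1 hu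
      obtain ⟨y, hy, rfl⟩ := Finset.mem_image.1 hv
      exact hdist x hx y hy fun h => huv (by rw [h])
    · intro u hu
      obtain ⟨x, hx, rfl⟩ := Finset.mem_image.1 hu
      exact hg x hx
  calc ∑ x ∈ F, cov e (closedBall z R ∩ orb (x : X)) / cov e (closedBall (x : X) δ ∩ orb (x : X))
      = ∑ x ∈ F', cov e (closedBall z R ∩ orb (x : X)) /
          cov e (closedBall (x : X) δ ∩ orb (x : X)) := by
        refine (Finset.sum_filter_of_ne fun x _ hx => ?_).symm
        by_contra hne
        rw [not_nonempty_iff_eq_empty] at hne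
        exact hx (by rw [hne]; simp [cov])
    _ ≤ ∑ x ∈ F', (N R : ℝ≥0∞) := Finset.sum_le_sum fun x _ => hterm x
    _ = F'.card * N R := by simp
    _ ≤ N R * N R := by gcongr

theorem one_le_weight_closedBall [ProperSpace X] (hδ : 0 < δ) (he : e ≠ 0)
    (hA : ∀ y, ∃ x ∈ A, ∃ g : X ≃ᵢ X, dist (g x) y ≤ δ) (z : X) :
    1 ≤ weight A δ e (closedBall z (2 * δ)) := by
  obtain ⟨x, hx, g, hg⟩ := hA z
  refine le_trans ?_ (ENNReal.le_tsum (⟨x, hx⟩ : A))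
  have h1 := den_ne_zero hδ.le e x
  have h2 : cov e (closedBall x δ ∩ orb x) ≠ ⊤ := cov_ne_top he inter_subset_left
  rw [ENNReal.le_div_iff_mul_le (Or.inl h1) (Or.inl h2), one_mul, ← cov_image e g, image_ball_orb]
  exact cov_mono e (inter_subset_inter_left _ (closedBall_subset_closedBall' (by linarith)))

end Weight

/-! ### The limit content and its measure -/

/-- An ultrafilter of positive scales converging to `0`. -/
noncomputable def scales : Ultrafilter ℝ≥0 := Ultrafilter.of (𝓝[>] (0 : ℝ≥0))

/-- The limit of `weight A δ e T` along the ultrafilter `scales`; it exists because `[0, ∞]` is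
compact. -/
noncomputable def limWeight (A : Set X) (δ : ℝ) (T : Set X) : ℝ≥0∞ :=
  (scales.map fun e => weight A δ e T).lim

section LimWeight

variable {A : Set X} {δ : ℝ} {N : ℝ → ℕ}

theorem tendsto_limWeight (A : Set X) (δ : ℝ) (T : Set X) :
    Tendsto (fun e => weight A δ e T) scales (𝓝 (limWeight A δ T)) :=
  (scales.map fun e => weight A δ e T).le_nhds_lim

theorem scales_le : (scales : Filter ℝ≥0) ≤ 𝓝[>] (0 : ℝ≥0) := Ultrafilter.of_le _

theorem eventually_scales_ne : ∀ᶠ e in (scales : Filter ℝ≥0), e ≠ 0 :=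
  scales_le (by filter_upwards [self_mem_nhdsWithin] with e he using (ne_of_gt he))

theorem eventually_scales_lt {c : ℝ} (hc : 0 < c) :
    ∀ᶠ e : ℝ≥0 in (scales : Filter ℝ≥0), 2 * (e : ℝ) < c := by
  have : Tendsto (fun e : ℝ≥0 => 2 * (e : ℝ)) (𝓝 0) (𝓝 (2 * ((0 : ℝ≥0) : ℝ))) :=
    (NNReal.continuous_coe.tendsto 0).const_mul 2
  rw [NNReal.coe_zero, mul_zero] at this
  exact (scales_le.trans nhdsWithin_le_nhds) (this.eventually_lt_const hc)

theorem limWeight_mono (A : Set X) (δ : ℝ) {S T : Set X} (h : S ⊆ T) :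
    limWeight A δ S ≤ limWeight A δ T :=
  le_of_tendsto_of_tendsto' (tendsto_limWeight A δ S) (tendsto_limWeight A δ T)
    fun e => weight_mono A δ e h

theorem limWeight_union_le (A : Set X) (δ : ℝ) (S T : Set X) :
    limWeight A δ (S ∪ T) ≤ limWeight A δ S + limWeight A δ T :=
  le_of_tendsto_of_tendsto' (tendsto_limWeight A δ _)
    ((tendsto_limWeight A δ S).add (tendsto_limWeight A δ T)) fun e => weight_union_le A δ e S T

/-- Disjoint compact sets are at positive distance, so at small scales their weights add up. -/
theorem limWeight_union (A : Set X) (δ : ℝ) {S T : Set X} (hS : IsCompact S) (hT : IsClosed T)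
    (h : Disjoint S T) : limWeight A δ (S ∪ T) = limWeight A δ S + limWeight A δ T := by
  refine le_antisymm (limWeight_union_le A δ S T) ?_
  obtain ⟨c, hc, hd⟩ := exists_pos_forall_lt_edist hS hT h
  refine le_of_tendsto_of_tendsto
    ((tendsto_limWeight A δ S).add (tendsto_limWeight A δ T)) (tendsto_limWeight A δ _) ?_
  filter_upwards [eventually_scales_lt (c := c) (by exact_mod_cast hc)] with e he
  refine weight_add_le A δ fun x hx y hy => he.trans ?_
  have := hd x hx y hy
  rw [edist_nndist] at this
  exact_mod_cast this

theorem limWeight_image (A : Set X) (δ : ℝ) (g : X ≃ᵢ X) (T : Set X) :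
    limWeight A δ (g '' T) = limWeight A δ T := by
  simp only [limWeight, weight_image]

theorem limWeight_closedBall_le [ProperSpace X] (hδ : 0 < δ) (hN : PackingBound X δ N)
    (hA : A.Pairwise fun x y => ∀ g : X ≃ᵢ X, δ < dist (g x) y) (z : X) (R : ℝ) :
    limWeight A δ (closedBall z R) ≤ N R * N R := by
  refine le_of_tendsto (tendsto_limWeight A δ _) ?_
  exact .of_forall fun e => weight_closedBall_le hδ hN hA z R

theorem one_le_limWeight_closedBall [ProperSpace X] (hδ : 0 < δ)
    (hA : ∀ y, ∃ x ∈ A, ∃ g : X ≃ᵢ X, dist (g x) y ≤ δ) (z : X) :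
    1 ≤ limWeight A δ (closedBall z (2 * δ)) := by
  refine ge_of_tendsto (tendsto_limWeight A δ _) ?_
  filter_upwards [eventually_scales_ne] with e he
  exact one_le_weight_closedBall hδ he hA z

theorem limWeight_ne_top [ProperSpace X] (hδ : 0 < δ) (hN : PackingBound X δ N)
    (hA : A.Pairwise fun x y => ∀ g : X ≃ᵢ X, δ < dist (g x) y) {K : Set X} (hK : IsCompact K) :
    limWeight A δ K ≠ ⊤ := by
  rcases K.eq_empty_or_nonempty with rfl | ⟨z, -⟩
  · have h0 : ∀ e, weight A δ e ∅ = 0 := fun e => by simp [weight, cov]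
    have := tendsto_limWeight A δ ∅
    simp only [h0] at this
    rw [tendsto_nhds_unique this tendsto_const_nhds]
    exact ENNReal.zero_ne_top
  obtain ⟨R, hR⟩ := hK.isBounded.subset_closedBall z
  exact ((limWeight_mono A δ hR).trans_lt ((limWeight_closedBall_le hδ hN hA z R).trans_lt
    (by finiteness))).ne

end LimWeight

/-- The limit weight is an isometry-invariant content; the measure it induces is tempered. -/
theorem exists_tempered [ProperSpace X] [MeasurableSpace X] [BorelSpace X] {δ : ℝ} (hδ : 0 < δ)
    {N : ℝ → ℕ} (hN : PackingBound X δ N) :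
    ∃ m : Measure X, IsRadon m ∧ (∀ g : X ≃ᵢ X, Measure.map (⇑g) m = m) ∧
      TemperedOn m (Set.Ici (2 * δ)) := by
  obtain ⟨A, hAs, hAc⟩ := exists_orbit_net X δ hδ.le
  have htop : ∀ K : Compacts X, limWeight A δ K ≠ ⊤ := fun K =>
    limWeight_ne_top hδ hN hAs K.isCompact
  let μ : Content X :=
    { toFun := fun K => (limWeight A δ K).toNNReal
      mono' := fun K L h => ENNReal.toNNReal_mono (htop L) (limWeight_mono A δ h)
      sup_disjoint' := fun K L h _ hL => by
        rw [← ENNReal.toNNReal_add (htop K) (htop L), Compacts.coe_sup,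
          limWeight_union A δ K.isCompact hL h]
      sup_le' := fun K L => by
        rw [← ENNReal.toNNReal_add (htop K) (htop L), Compacts.coe_sup]
        exact ENNReal.toNNReal_mono (ENNReal.add_ne_top.2 ⟨htop K, htop L⟩)
          (limWeight_union_le A δ K L) }
  have hμ : ∀ K : Compacts X, μ K = limWeight A δ K := fun K => ENNReal.coe_toNNReal (htop K)
  refine ⟨μ.measure, ⟨inferInstance, inferInstance⟩, fun g => ?_, fun r hr => ?_⟩
  · ext s hs
    have hg : Measurable g := g.continuous.measurable
    rw [Measure.map_apply hg hs, μ.measure_apply (hg hs), μ.measure_apply hs]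
    refine μ.outerMeasure_preimage g.toHomeomorph (fun K => ?_) s
    rw [hμ, hμ]
    exact limWeight_image A δ g K
  · refine ⟨1, max 1 (N (r + 1) * N (r + 1)), one_pos, le_max_left _ _, ?_, fun x => ⟨?_, ?_⟩⟩
    · exact max_lt (by simp) (by finiteness)
    · rw [μ.measure_apply measurableSet_closedBall]
      refine ((one_le_limWeight_closedBall hδ hAc x).trans
        (limWeight_mono A δ (closedBall_subset_closedBall hr))).trans ?_
      have := μ.le_outerMeasure_compacts ⟨closedBall x r, isCompact_closedBall x r⟩
      rwa [hμ] at this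
    · rw [μ.measure_apply measurableSet_closedBall]
      have := μ.outerMeasure_interior_compacts ⟨closedBall x (r + 1), isCompact_closedBall _ _⟩
      rw [hμ] at this
      refine le_trans (measure_mono ?_) (this.trans
        ((limWeight_closedBall_le hδ hN hAs x (r + 1)).trans (le_max_right _ _)))
      exact (closedBall_subset_ball (by linarith)).trans ball_subset_interior_closedBall

/-! ### Tempered measures force exponential bounds -/

/-- In a geodesic space the ball of radius `s + t` lies in the `t`-neighbourhood of the concentric
ball of radius `s`. -/
theorem exists_near (hgeo : IsGeodesicSpace X) {x z : X} {s t : ℝ} (hs : 0 ≤ s) (ht : 0 ≤ t)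
    (hz : dist x z ≤ s + t) : ∃ w, dist x w ≤ s ∧ dist w z ≤ t := by
  rcases le_total (dist x z) s with h | h
  · exact ⟨z, h, by simpa using ht⟩
  obtain ⟨f, h0, h1, hf⟩ := hgeo x z
  have e0 := hf 0 ⟨le_rfl, dist_nonneg⟩ s ⟨hs, h⟩
  have e1 := hf s ⟨hs, h⟩ (dist x z) ⟨dist_nonneg, le_rfl⟩
  rw [h0, zero_sub, abs_neg, abs_of_nonneg hs] at e0
  rw [h1, abs_sub_comm, abs_of_nonneg (by linarith)] at e1
  exact ⟨f s, e0.le, by linarith⟩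

section Growth

variable [MeasurableSpace X] [BorelSpace X] {m : Measure X} {r : ℝ} {c C D : ℝ≥0∞}

theorem card_mul_le (hc : ∀ x, c ≤ m (closedBall x r)) {P : Finset X} {T : Set X}
    (hP : (P : Set X).PairwiseDisjoint fun y => closedBall y r)
    (hT : ∀ y ∈ P, closedBall y r ⊆ T) : P.card * c ≤ m T := by
  calc P.card * c = ∑ p ∈ P, c := by simp
    _ ≤ ∑ p ∈ P, m (closedBall p r) := Finset.sum_le_sum fun p _ => hc p
    _ = m (⋃ p ∈ P, closedBall p r) :=
        (measure_biUnion_finset hP fun _ _ => measurableSet_closedBall).symm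
    _ ≤ m T := measure_mono (iUnion₂_subset hT)

/-- A maximal `2r`-separated set in the ball of radius `R - r` carries disjoint `r`-balls inside
`closedBall x R`, so has at most `m (closedBall x R) / c` points; the concentric `4r`-balls cover
`closedBall x (R + r)` because of geodesicity. -/
theorem growth_step [ProperSpace X] (hgeo : IsGeodesicSpace X) (hr : 0 < r) (hc : ∀ x, c ≤ m (closedBall x r))
    (hD : ∀ x, m (closedBall x (4 * r)) ≤ D) (x : X) {R : ℝ} (hR : r ≤ R) :
    c * m (closedBall x (R + r)) ≤ D * m (closedBall x R) := by
  obtain ⟨P, hPT, hPs, hPc⟩ := exists_net (by linarith : 0 < 2 * r)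
    (subset_refl (closedBall x (R - r)))
  have h1 : P.card * c ≤ m (closedBall x R) := by
    refine card_mul_le hc (fun y hy z hz hyz => ?_) fun y hy => ?_
    · exact closedBall_disjoint_closedBall (by linarith [hPs hy hz hyz])
    · exact closedBall_subset_closedBall' (by linarith [mem_closedBall.1 (hPT hy)])
  have h2 : m (closedBall x (R + r)) ≤ P.card * D := by
    calc m (closedBall x (R + r)) ≤ m (⋃ p ∈ P, closedBall p (4 * r)) := by
          refine measure_mono fun z hz => ?_
          obtain ⟨w, hxw, hwz⟩ := exists_near hgeo (by linarith : 0 ≤ R - r)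
            (by linarith : 0 ≤ 2 * r) (x := x) (z := z) (by linarith [mem_closedBall'.1 hz])
          obtain ⟨p, hp, hwp⟩ := hPc w (mem_closedBall'.2 hxw)
          refine mem_iUnion₂.2 ⟨p, hp, mem_closedBall.2 ?_⟩
          linarith [dist_triangle_left z p w]
      _ ≤ ∑ p ∈ P, m (closedBall p (4 * r)) := measure_biUnion_finset_le _ _
      _ ≤ ∑ p ∈ P, D := Finset.sum_le_sum fun p _ => hD p
      _ = P.card * D := by simp
  calc c * m (closedBall x (R + r)) ≤ c * (P.card * D) := by gcongr
    _ = D * (P.card * c) := by ring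
    _ ≤ D * m (closedBall x R) := by gcongr

theorem growth [ProperSpace X] (hgeo : IsGeodesicSpace X) (hr : 0 < r) (hc : ∀ x, c ≤ m (closedBall x r))
    (hC : ∀ x, m (closedBall x r) ≤ D) (hD : ∀ x, m (closedBall x (4 * r)) ≤ D) (x : X) (n : ℕ) :
    c ^ n * m (closedBall x ((n + 1) * r)) ≤ D ^ (n + 1) := by
  induction n with
  | zero => simpa using hC x
  | succ n ih =>
    have h := growth_step hgeo hr hc hD x (R := (n + 1) * r)
      (by nlinarith [(Nat.cast_nonneg n : (0 : ℝ) ≤ n)])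
    rw [show ((n + 1 : ℕ) + 1 : ℝ) * r = (n + 1) * r + r by push_cast; ring]
    calc c ^ (n + 1) * m (closedBall x ((n + 1) * r + r))
        = c ^ n * (c * m (closedBall x ((n + 1) * r + r))) := by ring
      _ ≤ c ^ n * (D * m (closedBall x ((n + 1) * r))) := by gcongr
      _ = D * (c ^ n * m (closedBall x ((n + 1) * r))) := by ring
      _ ≤ D * D ^ (n + 1) := by gcongr
      _ = D ^ (n + 1 + 1) := by ring

/-- For `R ≥ r` the count comes from exponential growth of the measure of balls. For `R < r` any two
`r`-balls inside `closedBall x R` contain `x`, so at most one of them is allowed. -/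
theorem expBounded_of_tempered [ProperSpace X] (hgeo : IsGeodesicSpace X) (hr : 0 < r)
    (hm : TemperedOn m (Set.Ici r)) : ExpBounded X r := by
  obtain ⟨c, C, hc0, hcC, hC, h1⟩ := hm r (mem_Ici.2 le_rfl)
  obtain ⟨_, C', _, _, hC', h4⟩ := hm (4 * r) (mem_Ici.2 (by linarith))
  have hcD : c ≤ max C C' := hcC.trans (le_max_left _ _)
  have hDtop : max C C' < ⊤ := max_lt hC hC'
  have key := growth hgeo hr (fun x => (h1 x).1) (fun x => (h1 x).2.trans (le_max_left C C'))
    (fun x => (h4 x).2.trans (le_max_right C C'))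
  generalize max C C' = D at hcD hDtop key
  lift D to ℝ≥0 using hDtop.ne
  lift c to ℝ≥0 using (hcD.trans_lt hDtop).ne
  have hc : (0 : ℝ) < c := by exact_mod_cast hc0
  have hq : (1 : ℝ) ≤ D / c := (one_le_div hc).2 (by exact_mod_cast hcD)
  set q : ℝ := D / c with hqdef
  have ha : 1 ≤ q ^ (2 / r) := Real.one_le_rpow hq (by positivity)
  refine ⟨q ^ (2 / r), by linarith, fun x R hR s hs hsR => ?_⟩
  rcases lt_or_ge R r with hRr | hRr
  · have : s.card ≤ 1 := by
      refine Finset.card_le_one.2 fun y hy z hz => by_contra fun hyz => ?_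
      have hx : ∀ y ∈ s, x ∈ closedBall y r := fun y hy => by
        have := mem_closedBall'.1 (hsR y hy (mem_closedBall_self hr.le))
        exact mem_closedBall.2 (by linarith)
      exact Set.disjoint_left.1 (hs hy hz hyz) (hx y hy) (hx z hz)
    exact le_trans (by exact_mod_cast this) (Real.one_le_rpow ha hR.le)
  · have hn1 := Nat.lt_floor_add_one (R / r)
    have hn2 := Nat.floor_le (div_nonneg hR.le hr.le)
    set n := ⌊R / r⌋₊
    have hle : R ≤ (n + 1) * r := ((div_lt_iff₀ hr).1 hn1).le
    have h2 := card_mul_le (fun x => (h1 x).1) hs hsR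
    have h3 : (s.card : ℝ≥0∞) * c ^ (n + 1) ≤ D ^ (n + 1) := by
      calc (s.card : ℝ≥0∞) * c ^ (n + 1) = c ^ n * (s.card * c) := by ring
        _ ≤ c ^ n * m (closedBall x ((n + 1) * r)) := by
          gcongr
          exact h2.trans (measure_mono (closedBall_subset_closedBall hle))
        _ ≤ D ^ (n + 1) := key x n
    have h3' : (s.card : ℝ) * (c : ℝ) ^ (n + 1) ≤ (D : ℝ) ^ (n + 1) := by exact_mod_cast h3
    have h4' : (s.card : ℝ) ≤ q ^ (n + 1) := by
      rw [hqdef, div_pow, le_div_iff₀ (by positivity)]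
      exact h3'
    refine h4'.trans ?_
    rw [← Real.rpow_mul (by linarith), ← Real.rpow_natCast]
    refine Real.rpow_le_rpow_of_exponent_le hq ?_
    have : 1 ≤ R / r := (one_le_div hr).2 hRr
    rw [div_mul_eq_mul_div, mul_div_assoc]
    push_cast
    linarith

end Growth

end ExpTempered

/-- A proper geodesic metric space is exponentially bounded if and only if it is tempered,
i.e. carries a tempered Radon measure invariant under every bijective isometry. -/
theorem exponentially_bounded_iff_tempered
    (X : Type*) [MetricSpace X] [ProperSpace X] [MeasurableSpace X] [BorelSpace X]
    (hgeo : IsGeodesicSpace X) :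
    (∃ ρ : ℝ, 0 < ρ ∧ ExpBounded X ρ) ↔
      (∃ (r : ℝ) (m : Measure X), 0 < r ∧ IsRadon m ∧
        (∀ g : X ≃ᵢ X, Measure.map (⇑g) m = m) ∧ TemperedOn m (Set.Ici r)) := by
  constructor
  · rintro ⟨ρ, hρ, h⟩
    obtain ⟨N, hN⟩ := ExpTempered.ExpBounded.packingBound hρ h
    obtain ⟨m, h1, h2, h3⟩ := ExpTempered.exists_tempered (by linarith : 0 < 2 * ρ) hN
    exact ⟨2 * (2 * ρ), m, by linarith, h1, h2, h3⟩
  · rintro ⟨r, m, hr, -, -, hm⟩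
    exact ⟨r, hr, ExpTempered.expBounded_of_tempered hgeo hr hm⟩
end

section
/- If a geodesic metric space X carries an (r1,r2)-tempered Radon measure m with r2/r1 > 3, then X is exponentially r1-bounded. -/
/-!
The measure bounds how many disjoint `r₁`-balls fit in an `r₂`-ball, by some `K`
(`packing_mul_le_measure`). A maximal packing with centres in `B(x, r₂ - r₁)` therefore gives at
most `K` balls of radius `2 r₁` covering `B(x, r₂ - r₁)` (`exists_cover`). Since `r₂ > 3 r₁`, we have
`r₂ - r₁ = 2 r₁ + δ` with `δ > 0`, so each such cover gains a definite amount `δ` in radius.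
Subdividing geodesics and iterating yields `m (B(x, 2 r₁ + n δ)) ≤ K ^ n * C(2 r₁)`
(`measure_ball_le`). Thus ball measures grow at most exponentially in the radius, and dividing by
the lower bound for the measure of an `r₁`-ball bounds the size of every packing.

The bound `a ^ r` tends to `1` as `r → 0`, so small radii need a separate remark: in a geodesic
space the centres of two disjoint closed `r₁`-balls are more than `2 r₁` apart, hence a ball of
radius `r ≤ r₁` contains at most one `r₁`-ball, while for `r > r₁` multiplicative constants can be
absorbed into `a`.
-/

open MeasureTheory Metric Set ENNReal

/-- A geodesic can be cut at a point splitting its length into prescribed bounds. -/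
lemma IsGeodesicSpace.exists_between {X : Type*} [MetricSpace X] (h : IsGeodesicSpace X)
    {x z : X} {a b : ℝ} (ha : 0 ≤ a) (hb : 0 ≤ b) (hd : dist x z ≤ a + b) :
    ∃ w, dist x w ≤ a ∧ dist w z ≤ b := by
  obtain ⟨f, h0, h1, hf⟩ := h x z
  have hdn : 0 ≤ dist x z := dist_nonneg
  have hm : min a (dist x z) ∈ Set.Icc (0 : ℝ) (dist x z) := ⟨le_min ha hdn, min_le_right _ _⟩
  refine ⟨f (min a (dist x z)), ?_, ?_⟩
  · have := hf 0 ⟨le_rfl, hdn⟩ _ hm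
    rw [h0] at this
    rw [this, zero_sub, abs_neg, abs_of_nonneg hm.1]
    exact min_le_left _ _
  · have := hf _ hm (dist x z) ⟨hdn, le_rfl⟩
    rw [h1] at this
    rw [this, abs_sub_comm, abs_of_nonneg (sub_nonneg.2 hm.2)]
    rcases min_cases a (dist x z) with ⟨h, _⟩ | ⟨h, _⟩ <;> rw [h] <;> linarith

lemma packing_mul_le_measure {X : Type*} [MetricSpace X] [MeasurableSpace X] [BorelSpace X]
    {m : Measure X} {ρ : ℝ} {c : ℝ≥0∞} (hc : ∀ y : X, c ≤ m (closedBall y ρ))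
    {s : Finset X} {A : Set X}
    (hs : (s : Set X).Pairwise fun y z => Disjoint (closedBall y ρ) (closedBall z ρ))
    (hA : ∀ y ∈ s, closedBall y ρ ⊆ A) : (s.card : ℝ≥0∞) * c ≤ m A := by
  calc (s.card : ℝ≥0∞) * c = ∑ _y ∈ s, c := by simp
    _ ≤ ∑ y ∈ s, m (closedBall y ρ) := Finset.sum_le_sum fun y _ => hc y
    _ = m (⋃ y ∈ s, closedBall y ρ) :=
      (measure_biUnion_finset hs fun y _ => measurableSet_closedBall).symm
    _ ≤ m A := measure_mono (iUnion₂_subset hA)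

/-- If packings by `ρ`-balls with centres in `A` have at most `K` members, then `A` is covered by
`K` balls of radius `2ρ`: the centres of a packing of maximal size work. -/
lemma exists_cover {X : Type*} [MetricSpace X] {ρ : ℝ} {K : ℕ} (hρ : 0 ≤ ρ) {A : Set X}
    (hK : ∀ s : Finset X, (s : Set X) ⊆ A →
      ((s : Set X).Pairwise fun y z => Disjoint (closedBall y ρ) (closedBall z ρ)) → s.card ≤ K) :
    ∃ s : Finset X, s.card ≤ K ∧ A ⊆ ⋃ y ∈ s, closedBall y (2 * ρ) := by
  classical
  let P : ℕ → Prop := fun n => ∃ s : Finset X, (s : Set X) ⊆ A ∧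
    ((s : Set X).Pairwise fun y z => Disjoint (closedBall y ρ) (closedBall z ρ)) ∧ s.card = n
  have hP0 : P 0 := ⟨∅, by simp, by simp, rfl⟩
  obtain ⟨s, hsA, hs, hcard⟩ : P (Nat.findGreatest P K) := Nat.findGreatest_spec (Nat.zero_le K) hP0
  refine ⟨s, hK s hsA hs, fun z hz => ?_⟩
  by_contra hcon
  simp only [mem_iUnion, mem_closedBall, not_exists, not_le] at hcon
  have hzs : z ∉ s := fun h => by
    have := hcon z h
    rw [dist_self] at this
    linarith
  have hdisj : ∀ y ∈ s, Disjoint (closedBall z ρ) (closedBall y ρ) := fun y hy =>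
    closedBall_disjoint_closedBall (by linarith [hcon y hy])
  have hA' : ((insert z s : Finset X) : Set X) ⊆ A := by
    rw [Finset.coe_insert]
    exact Set.insert_subset hz hsA
  have hs' : ((insert z s : Finset X) : Set X).Pairwise
      fun y z => Disjoint (closedBall y ρ) (closedBall z ρ) := by
    rw [Finset.coe_insert]
    exact hs.insert fun y hy _ => ⟨hdisj y hy, (hdisj y hy).symm⟩
  have := Nat.le_findGreatest (P := P) (hK _ hA' hs') ⟨_, hA', hs', rfl⟩
  rw [Finset.card_insert_of_notMem hzs] at this
  omega

/-- Covering by `K` balls with a gain `δ` in radius iterates, along geodesics, to exponential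
growth of the measure of balls. -/
lemma measure_ball_le {X : Type*} [MetricSpace X] [MeasurableSpace X] (hgeo : IsGeodesicSpace X)
    {m : Measure X} {ρ δ : ℝ} {K : ℕ} {C : ℝ≥0∞} (hρ : 0 ≤ ρ) (hδ : 0 ≤ δ)
    (hcov : ∀ x : X, ∃ s : Finset X, s.card ≤ K ∧
      closedBall x (ρ + δ) ⊆ ⋃ y ∈ s, closedBall y ρ)
    (hC : ∀ x : X, m (closedBall x ρ) ≤ C) (n : ℕ) (x : X) :
    m (closedBall x (ρ + n * δ)) ≤ (K : ℝ≥0∞) ^ n * C := by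
  induction n generalizing x with
  | zero => simpa using hC x
  | succ n ih =>
    obtain ⟨s, hsK, hs⟩ := hcov x
    have hsub : closedBall x (ρ + (n + 1 : ℕ) * δ) ⊆ ⋃ y ∈ s, closedBall y (ρ + n * δ) := by
      intro z hz
      rw [mem_closedBall, dist_comm] at hz
      push_cast at hz
      obtain ⟨w, hw1, hw2⟩ := hgeo.exists_between (x := x) (z := z) (a := ρ + δ) (b := n * δ)
        (by positivity) (by positivity) (by linarith)
      have hw := hs (mem_closedBall'.2 hw1)
      simp only [mem_iUnion, mem_closedBall, exists_prop] at hw ⊢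
      obtain ⟨y, hy, hwy⟩ := hw
      refine ⟨y, hy, ?_⟩
      have := dist_triangle z w y
      rw [dist_comm z w] at this
      linarith
    calc m (closedBall x (ρ + (n + 1 : ℕ) * δ))
        ≤ ∑ y ∈ s, m (closedBall y (ρ + n * δ)) :=
          (measure_mono hsub).trans (measure_biUnion_finset_le _ _)
      _ ≤ ∑ _y ∈ s, (K : ℝ≥0∞) ^ n * C := Finset.sum_le_sum fun y _ => ih y
      _ = s.card * ((K : ℝ≥0∞) ^ n * C) := by simp
      _ ≤ K * ((K : ℝ≥0∞) ^ n * C) := by gcongr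
      _ = (K : ℝ≥0∞) ^ (n + 1) * C := by ring

/-- In a geodesic space, a ball of radius `r ≤ ρ` contains at most one member of a packing by
`ρ`-balls: two centres at distance at most `2ρ` have a point within `ρ` of both. -/
lemma card_le_one_of_le {X : Type*} [MetricSpace X] (hgeo : IsGeodesicSpace X) {ρ r : ℝ}
    (hρ : 0 ≤ ρ) (hr : r ≤ ρ) {x : X} {s : Finset X}
    (hs : (s : Set X).Pairwise fun y z => Disjoint (closedBall y ρ) (closedBall z ρ))
    (hsub : ∀ y ∈ s, closedBall y ρ ⊆ closedBall x r) : s.card ≤ 1 := by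
  refine Finset.card_le_one.2 fun y hy z hz => ?_
  by_contra hne
  have h1 := mem_closedBall.1 (hsub y hy (mem_closedBall_self hρ))
  have h2 := mem_closedBall.1 (hsub z hz (mem_closedBall_self hρ))
  obtain ⟨w, hw1, hw2⟩ := hgeo.exists_between (x := y) (z := z) hρ hρ
    (by linarith [dist_triangle_right y z x])
  exact Set.disjoint_left.1 (hs hy hz hne) (mem_closedBall'.2 hw1) (mem_closedBall.2 hw2)

/-- If a geodesic metric space carries an `(r₁,r₂)`-tempered Radon measure with
`r₂ / r₁ > 3`, then it is exponentially `r₁`-bounded. -/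
theorem expBounded_of_tempered
    (X : Type*) [MetricSpace X] [MeasurableSpace X] [BorelSpace X]
    (hgeo : IsGeodesicSpace X) (r₁ r₂ : ℝ) (hr₁ : 0 < r₁) (hr₁₂ : r₁ ≤ r₂)
    (hratio : 3 < r₂ / r₁) (m : Measure X) (hRadon : IsRadon m)
    (htemp : TemperedOn m (Set.Icc r₁ r₂)) :
    ExpBounded X r₁ := by
  have h3 : 3 * r₁ < r₂ := (lt_div_iff₀ hr₁).1 hratio
  obtain ⟨c, C₁, hc0, hcC₁, hC₁, hc⟩ := htemp r₁ ⟨le_rfl, hr₁₂⟩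
  obtain ⟨_, D, _, _, hD, hDle⟩ := htemp (2 * r₁) ⟨by linarith, by linarith⟩
  obtain ⟨_, C, _, _, hC, hCle⟩ := htemp r₂ ⟨hr₁₂, le_rfl⟩
  have hct : c ≠ ⊤ := (hcC₁.trans_lt hC₁).ne
  -- `K` bounds packings inside `r₂`-balls; taking it also above `D / c` saves a second constant.
  obtain ⟨K, hK⟩ := ENNReal.exists_nat_gt (r := max (C / c) (D / c))
    (max_lt (ENNReal.div_lt_top hC.ne hc0.ne') (ENNReal.div_lt_top hD.ne hc0.ne')).ne
  have hK1 : 1 ≤ K := by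
    rcases Nat.eq_zero_or_pos K with rfl | h
    · simp at hK
    · exact h
  have hK1' : (1 : ℝ) ≤ K := by exact_mod_cast hK1
  have hCK : C / c ≤ K := (le_max_left _ _).trans hK.le
  have hDK : D / c ≤ K := (le_max_right _ _).trans hK.le
  set δ := r₂ - 3 * r₁ with hδ
  have hδ0 : 0 < δ := by linarith
  have hcov : ∀ x : X, ∃ s : Finset X, s.card ≤ K ∧
      closedBall x (2 * r₁ + δ) ⊆ ⋃ y ∈ s, closedBall y (2 * r₁) := by
    intro x
    refine exists_cover hr₁.le fun s hsA hs => ?_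
    have hle := packing_mul_le_measure (A := closedBall x r₂) (fun y => (hc y).1) hs fun y hy =>
      closedBall_subset_closedBall' (by linarith [mem_closedBall.1 (hsA hy)])
    have := (ENNReal.le_div_iff_mul_le (Or.inl hc0.ne') (Or.inl hct)).2 (hle.trans (hCle x).2)
    exact_mod_cast this.trans hCK
  have hgrowth := measure_ball_le hgeo (by positivity) hδ0.le hcov fun x => (hDle x).2
  refine ⟨(K : ℝ) ^ (2 / r₁ + 1 / δ), by positivity, fun x r hr s hs hsub => ?_⟩
  rw [← Real.rpow_mul (by positivity)]
  rcases le_or_gt r r₁ with hrr | hrr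
  · calc (s.card : ℝ) ≤ 1 := by exact_mod_cast card_le_one_of_le hgeo hr₁.le hrr hs hsub
      _ ≤ _ := Real.one_le_rpow hK1' (by positivity)
  · set n := ⌈r / δ⌉₊ with hn
    have hn1 : r ≤ n * δ := (div_le_iff₀ hδ0).1 (Nat.le_ceil _)
    have hn2 : (n : ℝ) < r / δ + 1 := Nat.ceil_lt_add_one (by positivity)
    have hle := packing_mul_le_measure (fun y => (hc y).1) hs fun y hy =>
      (hsub y hy).trans (closedBall_subset_closedBall (by linarith : r ≤ 2 * r₁ + n * δ))
    have hle2 : (s.card : ℝ≥0∞) ≤ (K : ℝ≥0∞) ^ (n + 1) :=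
      calc (s.card : ℝ≥0∞) ≤ (K : ℝ≥0∞) ^ n * D / c :=
            (ENNReal.le_div_iff_mul_le (Or.inl hc0.ne') (Or.inl hct)).2 (hle.trans (hgrowth n x))
        _ = (K : ℝ≥0∞) ^ n * (D / c) := mul_div_assoc _ _ _
        _ ≤ (K : ℝ≥0∞) ^ n * K := by gcongr
        _ = _ := (pow_succ _ _).symm
    have hle3 : s.card ≤ K ^ (n + 1) := by exact_mod_cast hle2
    calc (s.card : ℝ) ≤ (K : ℝ) ^ (n + 1) := by exact_mod_cast hle3
      _ = (K : ℝ) ^ ((n : ℝ) + 1) := by rw [← Real.rpow_natCast]; push_cast; rfl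
      _ ≤ _ := by
        refine Real.rpow_le_rpow_of_exponent_le hK1' ?_
        -- `n + 1 < r / δ + 2`, and `r > r₁` lets `2 * (r / r₁)` absorb the constant.
        have h1 : 1 ≤ r / r₁ := (one_le_div hr₁).2 hrr.le
        have h2 : (2 / r₁ + 1 / δ) * r = 2 * (r / r₁) + r / δ := by ring
        rw [h2]
        linarith
end

section
/- If a geodesic metric space X is exponentially ρ-bounded, then X carries a (9ρ,∞)-tempered Radon measure. -/
/-!
The measure is the counting measure `∑ s ∈ S, δ_s` of a maximal `2ρ`-separated set `S`, which exists
by Zorn's lemma (`exists_maximal_separated`).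

* Lower bound: by maximality every point is within `2ρ` of `S`, so every closed ball of radius at
  least `2ρ` has mass at least `1`.
* Upper bound: the `ρ`-balls centred at points of `S` are pairwise disjoint by the triangle
  inequality, and those centred in
  `B(x,r)` lie in `B(x,r+ρ)`; exponential boundedness leaves at most `a ^ (r+ρ)` of them
  (`separatedMeasure_closedBall_le`). In particular the measure is locally finite.
* Inner regularity: the mass of a set is the supremum of the masses of its finite subsets.
-/

open MeasureTheory Metric Set ENNReal

/-- A maximal `δ`-separated set: its points are at mutual distance greater than `δ`, and every
point of the space is within `δ` of it. -/
theorem exists_maximal_separated (X : Type*) [MetricSpace X] (δ : ℝ) (hδ : 0 ≤ δ) :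
    ∃ S : Set X, S.Pairwise (fun y z => δ < dist y z) ∧ ∀ x, ∃ s ∈ S, dist s x ≤ δ := by
  obtain ⟨S, hS⟩ := zorn_subset {S : Set X | S.Pairwise (fun y z => δ < dist y z)} (by
    intro c hc hchain
    exact ⟨⋃₀ c, (pairwise_sUnion hchain.directedOn).2 hc, fun s hs => subset_sUnion_of_mem hs⟩)
  refine ⟨S, hS.prop, fun x => ?_⟩
  by_contra! h
  have hins : (insert x S).Pairwise (fun y z => δ < dist y z) :=
    hS.prop.insert fun y hy _ => ⟨by rw [dist_comm]; exact h y hy, h y hy⟩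
  have hx : x ∈ S := hS.le_of_ge hins (subset_insert x S) (mem_insert x S)
  have := h x hx
  rw [dist_self] at this
  linarith

/-- The counting measure of `S`, written as a sum of Dirac masses so that its values do not depend
on measurability of `S`. -/
noncomputable def separatedMeasure {X : Type*} [MeasurableSpace X] (S : Set X) : Measure X :=
  Measure.sum fun s : S => Measure.dirac (s : X)

theorem separatedMeasure_apply {X : Type*} [MeasurableSpace X] (S : Set X) {A : Set X}
    (hA : MeasurableSet A) :
    separatedMeasure S A = ⨆ t : Finset S, ∑ s ∈ t, A.indicator (1 : X → ℝ≥0∞) s := by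
  rw [separatedMeasure, Measure.sum_apply _ hA, ENNReal.tsum_eq_iSup_sum]
  simp only [Measure.dirac_apply' _ hA]

/-- The compact approximants are finite subsets of `S`, one for each finite partial sum. -/
theorem separatedMeasure_innerRegular {X : Type*} [MetricSpace X] [MeasurableSpace X]
    [BorelSpace X] (S : Set X) : (separatedMeasure S).InnerRegular := by
  classical
  refine ⟨fun U hU r hr => ?_⟩
  rw [separatedMeasure_apply S hU, lt_iSup_iff] at hr
  obtain ⟨t, ht⟩ := hr
  have hfin : (U ∩ (fun s : S => (s : X)) '' (t : Set S)).Finite :=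
    (t.finite_toSet.image _).inter_of_right _
  refine ⟨_, inter_subset_left, hfin.isCompact, ht.trans_le ?_⟩
  rw [separatedMeasure_apply S hfin.measurableSet]
  refine le_iSup_of_le t (Finset.sum_le_sum fun s hs => ?_)
  by_cases hsU : (s : X) ∈ U
  · have : (s : X) ∈ U ∩ (fun s : S => (s : X)) '' (t : Set S) := ⟨hsU, s, hs, rfl⟩
    rw [indicator_of_mem hsU, indicator_of_mem this]
  · rw [indicator_of_notMem hsU]
    exact zero_le

theorem separatedMeasure_closedBall_le {X : Type*} [MetricSpace X] [MeasurableSpace X]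
    [BorelSpace X] {S : Set X} {ρ a : ℝ} (hρ : 0 < ρ)
    (hS : S.Pairwise (fun y z => 2 * ρ < dist y z))
    (ha : ∀ (x : X) (r : ℝ), 0 < r → ∀ s : Finset X,
      ((s : Set X).Pairwise fun y z => Disjoint (closedBall y ρ) (closedBall z ρ)) →
      (∀ y ∈ s, closedBall y ρ ⊆ closedBall x r) → (s.card : ℝ) ≤ a ^ r)
    (x : X) {r : ℝ} (hr : 0 ≤ r) :
    separatedMeasure S (closedBall x r) ≤ ENNReal.ofReal (a ^ (r + ρ)) := by
  classical
  rw [separatedMeasure_apply S measurableSet_closedBall]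
  refine iSup_le fun t => ?_
  -- The sum counts the centres in `t` that lie in the ball.
  set u : Finset X := (t.filter fun s : S => (s : X) ∈ closedBall x r).map
    (Function.Embedding.subtype _) with hu
  have hsum : ∑ s ∈ t, (closedBall x r).indicator (1 : X → ℝ≥0∞) s = (u.card : ℝ≥0∞) := by
    rw [hu, Finset.card_map, ← Finset.sum_boole]
    exact Finset.sum_congr rfl fun s _ => by simp [indicator_apply]
  have hmem : ∀ y ∈ u, y ∈ S ∧ dist y x ≤ r := by
    intro y hy
    obtain ⟨s, hs, rfl⟩ := Finset.mem_map.1 hy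
    exact ⟨s.2, (Finset.mem_filter.1 hs).2⟩
  have hcard : (u.card : ℝ) ≤ a ^ (r + ρ) := by
    refine ha x (r + ρ) (by positivity) u (fun y hy z hz hyz => ?_) (fun y hy => ?_)
    · refine closedBall_disjoint_closedBall ?_
      linarith [hS (hmem y hy).1 (hmem z hz).1 hyz]
    · exact closedBall_subset_closedBall' (by linarith [(hmem y hy).2])
  rw [hsum, ← ENNReal.ofReal_natCast]
  exact ENNReal.ofReal_le_ofReal hcard

/-- If a geodesic metric space is exponentially `ρ`-bounded, then it carries a
`(9ρ,∞)`-tempered Radon measure. -/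
theorem tempered_of_expBounded
    (X : Type*) [MetricSpace X] [MeasurableSpace X] [BorelSpace X]
    (hgeo : IsGeodesicSpace X) (ρ : ℝ) (hρ : 0 < ρ) (hb : ExpBounded X ρ) :
    ∃ m : Measure X, IsRadon m ∧ TemperedOn m (Set.Ici (9 * ρ)) := by
  obtain ⟨a, -, ha⟩ := hb
  obtain ⟨S, hS, hnet⟩ := exists_maximal_separated X (2 * ρ) (by positivity)
  refine ⟨separatedMeasure S, ⟨⟨fun x => ?_⟩, separatedMeasure_innerRegular S⟩, fun r hr => ?_⟩
  · exact ⟨closedBall x 1, closedBall_mem_nhds x one_pos,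
      (separatedMeasure_closedBall_le hρ hS ha x zero_le_one).trans_lt ENNReal.ofReal_lt_top⟩
  · have hr' : 9 * ρ ≤ r := hr
    -- The maximum with `1` gives `c ≤ C` even when `X` is empty.
    refine ⟨1, max 1 (ENNReal.ofReal (a ^ (r + ρ))), one_pos, le_max_left _ _,
      max_lt ENNReal.one_lt_top ENNReal.ofReal_lt_top, fun x => ⟨?_, ?_⟩⟩
    · obtain ⟨s, hs, hsx⟩ := hnet x
      rw [separatedMeasure_apply S measurableSet_closedBall]
      refine le_iSup_of_le {⟨s, hs⟩} ?_
      have : s ∈ closedBall x r := mem_closedBall.2 (by linarith)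
      simp [this, -mem_closedBall]
    · exact (separatedMeasure_closedBall_le hρ hS ha x (by linarith)).trans (le_max_right _ _)
end

section
/- If a proper geodesic metric space X is exponentially ρ-bounded, then X carries a (9ρ,∞)-tempered Radon measure that is invariant under every bijective isometry of X. -/
/-! The measure is a sum of invariant measures carried by orbits of the isometry group of `X`.

On a single orbit `O`, covering numbers of `K ∩ O` by balls of radius `ε`, divided by the covering
number of a fixed ball `B(t,2ρ)` with `t ∈ O`, converge along an ultrafilter as `ε → 0` to an
isometry-invariant function of the compact set `K`. At scales smaller than half the distance between
two disjoint compact sets no ball meets both, so the limit is additive (`orbitLim_union`), hence a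
content, and it induces an invariant Borel measure. By homogeneity of `O`, balls `B(y,2ρ)` centred
on `O` have content `1` (`orbitLim_closedBall`), and the content of `K` is at most the number of
such balls needed to cover `K ∩ O` (`orbitLim_le_card`).

Now take a maximal family of orbits at mutual distance more than `2ρ` and sum. By maximality every
point is within `2ρ` of some chosen orbit, so every ball of radius at least `4ρ` contains some
`B(y,2ρ)` centred on a chosen orbit and has measure at least `1`. For the upper bound, choose in
each chosen orbit a maximal `2ρ`-separated set of points of `B(x,R)`: its cardinality bounds the
content of `B(x,R)`. The union of these sets over all orbits is still `2ρ`-separated, so the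
`ρ`-balls about its points are disjoint, and exponential boundedness bounds the total
(`tsum_orbitLim_le`). -/

open MeasureTheory Metric Set ENNReal

/-! ### Covering numbers of subsets of an orbit -/

/-- The orbit of `t` under the group of all bijective isometries of `X`. -/
def isomOrbit {X : Type*} [MetricSpace X] (t : X) : Set X :=
  {y | ∃ g : X ≃ᵢ X, g t = y}

lemma apply_mem_isomOrbit {X : Type*} [MetricSpace X] {t y : X} (g : X ≃ᵢ X) :
    g y ∈ isomOrbit t ↔ y ∈ isomOrbit t := by
  constructor
  · rintro ⟨h, hh⟩
    exact ⟨h.trans g.symm, by simp [hh]⟩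
  · rintro ⟨h, rfl⟩
    exact ⟨h.trans g, rfl⟩

lemma externalCoveringNumber_union_le {X : Type*} [MetricSpace X] (ε : NNReal) (A B : Set X) :
    externalCoveringNumber ε (A ∪ B) ≤
      externalCoveringNumber ε A + externalCoveringNumber ε B := by
  conv_rhs => simp only [externalCoveringNumber]
  simp only [iInf_subtype', ENat.iInf_add, ENat.add_iInf]
  refine le_iInf fun D => le_iInf fun C => ?_
  refine le_trans (IsCover.externalCoveringNumber_le_encard (C := C.1 ∪ D.1) ?_)
    (encard_union_le _ _)
  rintro x (hx | hx)
  · obtain ⟨c, hc, h⟩ := C.2 hx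
    exact ⟨c, Or.inl hc, h⟩
  · obtain ⟨c, hc, h⟩ := D.2 hx
    exact ⟨c, Or.inr hc, h⟩

/-- At scales below half the distance between two sets no covering ball meets both of them, so
covering numbers add up. -/
lemma externalCoveringNumber_add_le {X : Type*} [MetricSpace X] (ε : NNReal) (A B : Set X)
    (h : ∀ x ∈ A, ∀ y ∈ B, 2 * (ε : ℝ≥0∞) < edist x y) :
    externalCoveringNumber ε A + externalCoveringNumber ε B ≤
      externalCoveringNumber ε (A ∪ B) := by
  conv_rhs => simp only [externalCoveringNumber]
  refine le_iInf₂ fun C hC => ?_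
  set CA := {c ∈ C | ∃ a ∈ A, edist a c ≤ ε}
  set CB := {c ∈ C | ∃ b ∈ B, edist b c ≤ ε}
  have hdisj : Disjoint CA CB := by
    rw [Set.disjoint_left]
    rintro c ⟨-, a, ha, hac⟩ ⟨-, b, hb, hbc⟩
    refine absurd (h a ha b hb) (not_lt.2 ?_)
    calc edist a b ≤ edist a c + edist c b := edist_triangle _ _ _
      _ ≤ ε + ε := by rw [edist_comm c b]; gcongr
      _ = 2 * (ε : ℝ≥0∞) := (two_mul _).symm
  have hA : IsCover ε A CA := fun a ha => by
    obtain ⟨c, hc, hac⟩ := hC (Or.inl ha)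
    exact ⟨c, ⟨hc, a, ha, hac⟩, hac⟩
  have hB : IsCover ε B CB := fun b hb => by
    obtain ⟨c, hc, hbc⟩ := hC (Or.inr hb)
    exact ⟨c, ⟨hc, b, hb, hbc⟩, hbc⟩
  calc _ ≤ CA.encard + CB.encard :=
        add_le_add hA.externalCoveringNumber_le_encard hB.externalCoveringNumber_le_encard
    _ = (CA ∪ CB).encard := (encard_union_eq hdisj).symm
    _ ≤ C.encard := encard_le_encard (union_subset (sep_subset _ _) (sep_subset _ _))

lemma externalCoveringNumber_image_le {X : Type*} [MetricSpace X] (ε : NNReal) (A : Set X)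
    (g : X ≃ᵢ X) : externalCoveringNumber ε (g '' A) ≤ externalCoveringNumber ε A := by
  conv_rhs => simp only [externalCoveringNumber]
  refine le_iInf₂ fun C hC => ?_
  exact ((g.isometry.isCover_image_iff C).2 hC).externalCoveringNumber_le_encard.trans
    (encard_image_le _ _)

/-- The number of balls of radius `1 / (n + 1)`, with centres anywhere in `X`, needed to cover the
part of `A` lying on the orbit of `t`. -/
noncomputable def orbitCov {X : Type*} [MetricSpace X] (t : X) (n : ℕ) (A : Set X) : ℝ≥0∞ :=
  (externalCoveringNumber (1 / ((n : NNReal) + 1)) (A ∩ isomOrbit t) : ℕ∞)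

section
variable {X : Type*} [MetricSpace X] (t : X)

lemma orbitCov_mono_inter (n : ℕ) {A B : Set X} (h : A ∩ isomOrbit t ⊆ B) :
    orbitCov t n A ≤ orbitCov t n B :=
  ENat.toENNReal_le.2 (externalCoveringNumber_mono_set (subset_inter h inter_subset_right))

lemma orbitCov_union_le (n : ℕ) (A B : Set X) :
    orbitCov t n (A ∪ B) ≤ orbitCov t n A + orbitCov t n B := by
  simp only [orbitCov]
  rw [← ENat.toENNReal_add, ENat.toENNReal_le, union_inter_distrib_right]
  exact externalCoveringNumber_union_le _ _ _

lemma orbitCov_biUnion_le (n : ℕ) (S : Finset X) (f : X → Set X) :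
    orbitCov t n (⋃ y ∈ S, f y) ≤ ∑ y ∈ S, orbitCov t n (f y) := by
  classical
  induction S using Finset.induction_on with
  | empty => simp [orbitCov]
  | insert a S ha ih =>
    rw [Finset.set_biUnion_insert, Finset.sum_insert ha]
    exact (orbitCov_union_le t n _ _).trans (by gcongr)

lemma orbitCov_image_le (n : ℕ) (A : Set X) (g : X ≃ᵢ X) :
    orbitCov t n (g '' A) ≤ orbitCov t n A := by
  refine ENat.toENNReal_le.2 (le_trans (externalCoveringNumber_mono_set ?_)
    (externalCoveringNumber_image_le _ _ g))
  rintro _ ⟨⟨x, hx, rfl⟩, hg⟩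
  exact ⟨x, ⟨hx, (apply_mem_isomOrbit g).1 hg⟩, rfl⟩

lemma orbitCov_image (n : ℕ) (A : Set X) (g : X ≃ᵢ X) :
    orbitCov t n (g '' A) = orbitCov t n A := by
  refine le_antisymm (orbitCov_image_le t n A g) ?_
  have := orbitCov_image_le t n (g '' A) g.symm
  rwa [← image_comp, show (g.symm ∘ g : X → X) = id from by ext; simp, image_id] at this

lemma orbitCov_closedBall (n : ℕ) (r : ℝ) {y : X} (hy : y ∈ isomOrbit t) :
    orbitCov t n (closedBall y r) = orbitCov t n (closedBall t r) := by
  obtain ⟨g, rfl⟩ := hy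
  rw [← g.image_closedBall, orbitCov_image]

lemma orbitCov_closedBall_ne_zero (n : ℕ) {r : ℝ} (hr : 0 < r) :
    orbitCov t n (closedBall t r) ≠ 0 := by
  rw [orbitCov, Ne, ENat.toENNReal_eq_zero, externalCoveringNumber_eq_zero, ← Ne,
    ← nonempty_iff_ne_empty]
  exact ⟨t, mem_closedBall_self hr.le, IsometryEquiv.refl X, rfl⟩

lemma orbitCov_ne_top [ProperSpace X] (n : ℕ) {K : Set X} (hK : IsCompact K) :
    orbitCov t n K ≠ ⊤ := by
  have hε : (1 / ((n : NNReal) + 1)) ≠ 0 := by positivity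
  obtain ⟨N, -, hN, hc⟩ := exists_finite_isCover_of_totallyBounded hε
    (hK.totallyBounded.subset (inter_subset_left (t := isomOrbit t)))
  rw [orbitCov, ENat.toENNReal_ne_top]
  exact (hc.externalCoveringNumber_le_encard.trans_lt hN.encard_lt_top).ne

/-! ### The limiting content on an orbit -/

/-- The limit, along a nonprincipal ultrafilter on the scales, of the covering number of `A ∩ orbit`
normalised by that of the `r`-ball about `t`. The ultrafilter limit exists by compactness of
`ℝ≥0∞`. -/
noncomputable def orbitLim (r : ℝ) (A : Set X) : ℝ≥0∞ :=
  (Ultrafilter.map (fun n => orbitCov t n A / orbitCov t n (closedBall t r))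
    (Filter.hyperfilter ℕ)).lim

lemma tendsto_orbitLim (r : ℝ) (A : Set X) :
    Filter.Tendsto (fun n => orbitCov t n A / orbitCov t n (closedBall t r))
      (Filter.hyperfilter ℕ : Filter ℕ) (nhds (orbitLim t r A)) :=
  Ultrafilter.le_nhds_lim _

lemma orbitLim_mono (r : ℝ) {A B : Set X} (h : A ⊆ B) : orbitLim t r A ≤ orbitLim t r B :=
  le_of_tendsto_of_tendsto' (tendsto_orbitLim t r A) (tendsto_orbitLim t r B) fun n =>
    ENNReal.div_le_div_right (orbitCov_mono_inter t n (inter_subset_left.trans h)) _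

lemma orbitLim_union_le (r : ℝ) (A B : Set X) :
    orbitLim t r (A ∪ B) ≤ orbitLim t r A + orbitLim t r B :=
  le_of_tendsto_of_tendsto' (tendsto_orbitLim t r _)
    ((tendsto_orbitLim t r A).add (tendsto_orbitLim t r B)) fun n => by
      rw [← ENNReal.add_div]
      exact ENNReal.div_le_div_right (orbitCov_union_le t n A B) _

lemma orbitLim_union (r : ℝ) {A B : Set X} (hA : IsCompact A) (hB : IsCompact B)
    (hAB : Disjoint A B) : orbitLim t r (A ∪ B) = orbitLim t r A + orbitLim t r B := by
  refine le_antisymm (orbitLim_union_le t r A B) ?_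
  obtain ⟨δ, hδ, hd⟩ := exists_pos_forall_lt_edist hA hB.isClosed hAB
  obtain ⟨N, hN⟩ := exists_nat_one_div_lt (show (0 : NNReal) < δ / 2 by positivity)
  refine le_of_tendsto_of_tendsto ((tendsto_orbitLim t r A).add (tendsto_orbitLim t r B))
    (tendsto_orbitLim t r (A ∪ B)) ?_
  -- The ultrafilter is nonprincipal, so it only sees small scales.
  have hev : ∀ᶠ n in (Filter.hyperfilter ℕ : Filter ℕ), N ≤ n :=
    Nat.hyperfilter_le_atTop (Filter.eventually_ge_atTop N)
  filter_upwards [hev] with n hn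
  rw [← ENNReal.add_div]
  refine ENNReal.div_le_div_right ?_ _
  simp only [orbitCov]
  rw [← ENat.toENNReal_add, ENat.toENNReal_le, union_inter_distrib_right]
  refine externalCoveringNumber_add_le _ _ _ fun x hx y hy => lt_of_le_of_lt ?_ (hd x hx.1 y hy.1)
  have h1 : (1 / ((n : NNReal) + 1)) ≤ δ / 2 := by
    refine le_trans ?_ hN.le
    have : (N : NNReal) ≤ n := by exact_mod_cast hn
    gcongr
  have h2 : 2 * (1 / ((n : NNReal) + 1)) ≤ δ := by
    calc 2 * (1 / ((n : NNReal) + 1)) ≤ 2 * (δ / 2) := by gcongr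
      _ = δ := by field_simp
  exact_mod_cast h2

lemma orbitLim_image (r : ℝ) (A : Set X) (g : X ≃ᵢ X) :
    orbitLim t r (g '' A) = orbitLim t r A := by
  simp only [orbitLim, orbitCov_image]

lemma orbitLim_closedBall [ProperSpace X] {r : ℝ} (hr : 0 < r) {y : X} (hy : y ∈ isomOrbit t) :
    orbitLim t r (closedBall y r) = 1 := by
  refine tendsto_nhds_unique (tendsto_orbitLim t r _) ?_
  simp_rw [orbitCov_closedBall t _ r hy]
  simp_rw [ENNReal.div_self (orbitCov_closedBall_ne_zero t _ hr)
    (orbitCov_ne_top t _ (isCompact_closedBall t r))]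
  exact tendsto_const_nhds

/-- All `r`-balls centred on the orbit have the same covering numbers, so the content of a set is
at most the number of such balls needed to cover its trace on the orbit. -/
lemma orbitLim_le_card [ProperSpace X] {r : ℝ} (hr : 0 < r) {A : Set X} (S : Finset X)
    (hS : ∀ y ∈ S, y ∈ isomOrbit t) (hA : A ∩ isomOrbit t ⊆ ⋃ y ∈ S, closedBall y r) :
    orbitLim t r A ≤ S.card := by
  refine le_of_tendsto' (tendsto_orbitLim t r A) fun n => ?_
  rw [ENNReal.div_le_iff (orbitCov_closedBall_ne_zero t _ hr)
    (orbitCov_ne_top t _ (isCompact_closedBall t r))]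
  calc orbitCov t n A ≤ orbitCov t n (⋃ y ∈ S, closedBall y r) := orbitCov_mono_inter t n hA
    _ ≤ ∑ y ∈ S, orbitCov t n (closedBall y r) := orbitCov_biUnion_le t n S _
    _ = S.card * orbitCov t n (closedBall t r) := by
      rw [Finset.sum_congr rfl fun y hy => orbitCov_closedBall t n r (hS y hy)]
      simp

lemma orbitLim_ne_top [ProperSpace X] {r : ℝ} (hr : 0 < r) {K : Set X} (hK : IsCompact K) :
    orbitLim t r K ≠ ⊤ := by
  obtain ⟨N, hNK, hN, hc⟩ := exists_finite_isCover_of_totallyBounded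
    (ε := r.toNNReal) (by simpa using hr)
    (hK.totallyBounded.subset (inter_subset_left (t := isomOrbit t)))
  have hsub := hc.subset_iUnion_closedBall
  rw [Real.coe_toNNReal r hr.le] at hsub
  refine ne_top_of_le_ne_top (ENNReal.natCast_ne_top _)
    (orbitLim_le_card t hr hN.toFinset (fun y hy => (hNK (hN.mem_toFinset.1 hy)).2) ?_)
  simpa using hsub

/-- `orbitLim` as a content on the compact subsets of `X`. -/
noncomputable def orbitContent [ProperSpace X] (r : ℝ) (hr : 0 < r) : Content X where
  toFun K := (orbitLim t r K).toNNReal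
  mono' K L h := ENNReal.toNNReal_mono (orbitLim_ne_top t hr L.isCompact) (orbitLim_mono t r h)
  sup_disjoint' K L h _ _ := by
    rw [← ENNReal.toNNReal_add (orbitLim_ne_top t hr K.isCompact)
      (orbitLim_ne_top t hr L.isCompact), TopologicalSpace.Compacts.coe_sup,
      orbitLim_union t r K.isCompact L.isCompact h]
  sup_le' K L := by
    rw [← ENNReal.toNNReal_add (orbitLim_ne_top t hr K.isCompact)
      (orbitLim_ne_top t hr L.isCompact), TopologicalSpace.Compacts.coe_sup]
    exact ENNReal.toNNReal_mono (ENNReal.add_ne_top.2 ⟨orbitLim_ne_top t hr K.isCompact,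
      orbitLim_ne_top t hr L.isCompact⟩) (orbitLim_union_le t r _ _)

lemma orbitContent_apply [ProperSpace X] (r : ℝ) (hr : 0 < r)
    (K : TopologicalSpace.Compacts X) : orbitContent t r hr K = orbitLim t r K := by
  exact ENNReal.coe_toNNReal (orbitLim_ne_top t hr K.isCompact)

/-- The measure on `X` induced by `orbitContent`: an isometry-invariant measure, normalised so
that closed `r`-balls centred on the orbit of `t` have content `1` and hence measure at least `1`. -/
noncomputable def orbitMeasure [ProperSpace X] [MeasurableSpace X] [BorelSpace X]
    (r : ℝ) (hr : 0 < r) : Measure X :=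
  (orbitContent t r hr).measure

variable [ProperSpace X] [MeasurableSpace X] [BorelSpace X]

lemma map_orbitMeasure (r : ℝ) (hr : 0 < r) (g : X ≃ᵢ X) :
    Measure.map (⇑g) (orbitMeasure t r hr) = orbitMeasure t r hr := by
  ext s hs
  have hg : Measurable (⇑g) := g.continuous.measurable
  rw [Measure.map_apply hg hs, orbitMeasure, Content.measure_apply _ (hg hs),
    Content.measure_apply _ hs]
  refine Content.outerMeasure_preimage _ g.toHomeomorph (fun K => ?_) s
  rw [orbitContent_apply, orbitContent_apply]
  exact orbitLim_image t r K g

lemma one_le_orbitMeasure (r : ℝ) (hr : 0 < r) {y : X} (hy : y ∈ isomOrbit t) :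
    1 ≤ orbitMeasure t r hr (closedBall y r) := by
  rw [orbitMeasure, Content.measure_apply _ measurableSet_closedBall, ← orbitLim_closedBall t hr hy]
  have := (orbitContent t r hr).le_outerMeasure_compacts ⟨_, isCompact_closedBall y r⟩
  rwa [orbitContent_apply] at this

lemma orbitMeasure_closedBall_le (r : ℝ) (hr : 0 < r) (x : X) (R : ℝ) :
    orbitMeasure t r hr (closedBall x R) ≤ orbitLim t r (closedBall x (R + 1)) := by
  refine (measure_mono (closedBall_subset_ball (lt_add_one R))).trans ?_
  rw [orbitMeasure, Content.measure_apply _ measurableSet_ball]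
  have := (orbitContent t r hr).outerMeasure_le ⟨ball x (R + 1), isOpen_ball⟩
    ⟨_, isCompact_closedBall x (R + 1)⟩ ball_subset_closedBall
  rwa [orbitContent_apply] at this

end

/-! ### Separated nets -/

lemma exists_maximal_pairwise {X : Type*} (A : Set X) (R : X → X → Prop)
    (hR : ∀ x y, R x y → R y x) :
    ∃ S ⊆ A, S.Pairwise R ∧ ∀ x ∈ A, x ∈ S ∨ ∃ y ∈ S, ¬ R x y := by
  obtain ⟨S, hS⟩ := zorn_subset {S : Set X | S ⊆ A ∧ S.Pairwise R} (by
    intro c hc hchain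
    refine ⟨⋃₀ c, ⟨sUnion_subset fun s hs => (hc hs).1, ?_⟩, fun s hs => subset_sUnion_of_mem hs⟩
    exact (pairwise_sUnion hchain.directedOn).2 fun s hs => (hc hs).2)
  refine ⟨S, hS.prop.1, hS.prop.2, fun x hx => ?_⟩
  by_contra! hcon
  refine hcon.1 (hS.le_of_ge (y := insert x S) ⟨insert_subset hx hS.prop.1, ?_⟩
    (subset_insert x S) (mem_insert x S))
  exact hS.prop.2.insert fun y hy _ => ⟨hcon.2 y hy, hR _ _ (hcon.2 y hy)⟩

/-- Exponential boundedness, read as a bound on the size of `2ρ`-separated subsets of balls. -/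
lemma card_le_of_separated {X : Type*} [MetricSpace X] {ρ : ℝ} (hρ : 0 < ρ) {a : ℝ}
    (ha : ∀ (x : X) (r : ℝ), 0 < r → ∀ s : Finset X,
      ((s : Set X).Pairwise fun y z => Disjoint (closedBall y ρ) (closedBall z ρ)) →
      (∀ y ∈ s, closedBall y ρ ⊆ closedBall x r) → (s.card : ℝ) ≤ a ^ r)
    (x : X) {R : ℝ} (hR : 0 < R) (s : Finset X)
    (hs : (s : Set X).Pairwise fun y z => 2 * ρ < dist y z) (hsR : ∀ y ∈ s, y ∈ closedBall x R) :
    s.card ≤ ⌊a ^ (R + ρ)⌋₊ := by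
  refine Nat.le_floor (ha x (R + ρ) (by positivity) s (fun y hy z hz hyz => ?_) fun y hy => ?_)
  · exact closedBall_disjoint_closedBall (by linarith [hs hy hz hyz])
  · refine closedBall_subset_closedBall' ?_
    have := mem_closedBall.1 (hsR y hy)
    linarith

/-- A maximal `2ρ`-separated set of orbit points in a ball is finite by exponential boundedness, and
its closed `2ρ`-balls cover the part of the orbit in that ball by maximality. -/
lemma exists_orbit_net {X : Type*} [MetricSpace X] {ρ : ℝ} (hρ : 0 < ρ) {a : ℝ}
    (ha : ∀ (x : X) (r : ℝ), 0 < r → ∀ s : Finset X,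
      ((s : Set X).Pairwise fun y z => Disjoint (closedBall y ρ) (closedBall z ρ)) →
      (∀ y ∈ s, closedBall y ρ ⊆ closedBall x r) → (s.card : ℝ) ≤ a ^ r)
    (x : X) {R : ℝ} (hR : 0 < R) (t : X) :
    ∃ S : Finset X, (∀ y ∈ S, y ∈ closedBall x R) ∧ (∀ y ∈ S, y ∈ isomOrbit t) ∧
      ((S : Set X).Pairwise fun y z => 2 * ρ < dist y z) ∧
      closedBall x R ∩ isomOrbit t ⊆ ⋃ y ∈ S, closedBall y (2 * ρ) := by
  obtain ⟨S, hSA, hSp, hSm⟩ := exists_maximal_pairwise (closedBall x R ∩ isomOrbit t)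
    (fun y z => 2 * ρ < dist y z) (fun y z h => by rwa [dist_comm])
  have hfin : S.Finite := by
    by_contra hinf
    obtain ⟨s, hsS, hs⟩ := Set.Infinite.exists_subset_card_eq hinf (⌊a ^ (R + ρ)⌋₊ + 1)
    have := card_le_of_separated hρ ha x hR s (hSp.mono hsS) fun y hy => (hSA (hsS hy)).1
    omega
  refine ⟨hfin.toFinset, fun y hy => (hSA (hfin.mem_toFinset.1 hy)).1,
    fun y hy => (hSA (hfin.mem_toFinset.1 hy)).2, by simpa using hSp, fun y hy => ?_⟩
  simp only [Finite.mem_toFinset, mem_iUnion, exists_prop, mem_closedBall]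
  rcases hSm y hy with h | ⟨z, hz, h⟩
  · exact ⟨y, h, by simp [hρ.le]⟩
  · exact ⟨z, hz, not_lt.1 h⟩

/-- If the orbits of the points of `T` are more than `2ρ` apart, then the contents of a ball,
summed over all these orbits, are bounded in terms of the radius only: `2ρ`-nets of the ball in the
various orbits together form one `2ρ`-separated set. -/
lemma tsum_orbitLim_le {X : Type*} [MetricSpace X] [ProperSpace X] {ρ : ℝ} (hρ : 0 < ρ) {a : ℝ}
    (ha : ∀ (x : X) (r : ℝ), 0 < r → ∀ s : Finset X,
      ((s : Set X).Pairwise fun y z => Disjoint (closedBall y ρ) (closedBall z ρ)) →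
      (∀ y ∈ s, closedBall y ρ ⊆ closedBall x r) → (s.card : ℝ) ≤ a ^ r)
    (x : X) {R : ℝ} (hR : 0 < R) (T : Set X)
    (hT : T.Pairwise fun s t => ∀ g : X ≃ᵢ X, 2 * ρ < dist s (g t)) :
    ∑' t : T, orbitLim (t : X) (2 * ρ) (closedBall x R) ≤ (⌊a ^ (R + ρ)⌋₊ : ℝ≥0∞) := by
  classical
  choose S hSR hSo hSp hSc using exists_orbit_net hρ ha x hR
  have hsep : ∀ s ∈ T, ∀ t ∈ T, s ≠ t → ∀ y ∈ S s, ∀ z ∈ S t, 2 * ρ < dist y z := by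
    intro s hs t ht hst y hy z hz
    obtain ⟨g, rfl⟩ := hSo s y hy
    obtain ⟨h, rfl⟩ := hSo t z hz
    have := hT hs ht hst (h.trans g.symm)
    rwa [← g.isometry.dist_eq, IsometryEquiv.trans_apply, IsometryEquiv.apply_symm_apply] at this
  rw [ENNReal.tsum_eq_iSup_sum]
  refine iSup_le fun F => ?_
  have hcard : (F.biUnion fun t : T => S t).card = ∑ t ∈ F, (S t).card := by
    refine Finset.card_biUnion fun s _ t _ hst => Finset.disjoint_left.2 fun y hy hy' => ?_
    have := hsep s s.2 t t.2 (fun h => hst (Subtype.ext h)) y hy y hy'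
    rw [dist_self] at this
    linarith
  calc ∑ t ∈ F, orbitLim (t : X) (2 * ρ) (closedBall x R)
      ≤ ∑ t ∈ F, ((S t).card : ℝ≥0∞) := Finset.sum_le_sum fun t _ =>
        orbitLim_le_card _ (by positivity) (S t) (hSo t) (hSc t)
    _ = ((F.biUnion fun t : T => S t).card : ℝ≥0∞) := by rw [hcard]; push_cast; rfl
    _ ≤ _ := by
      refine Nat.cast_le.2 (card_le_of_separated hρ ha x hR _ ?_ ?_)
      · intro y hy z hz hyz
        simp only [Finset.coe_biUnion, mem_iUnion, exists_prop, Finset.mem_coe] at hy hz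
        obtain ⟨s, -, hy⟩ := hy
        obtain ⟨t, -, hz⟩ := hz
        by_cases hst : s = t
        · subst hst
          exact hSp _ hy hz hyz
        · exact hsep s s.2 t t.2 (fun h => hst (Subtype.ext h)) y hy z hz
      · intro y hy
        obtain ⟨t, -, hy⟩ := Finset.mem_biUnion.1 hy
        exact hSR t y hy

/-! ### The invariant tempered measure -/

/-- If a proper geodesic metric space is exponentially `ρ`-bounded, then it carries a
`(9ρ,∞)`-tempered Radon measure which is invariant under every bijective isometry. -/
theorem invariant_tempered_of_expBounded
    (X : Type*) [MetricSpace X] [ProperSpace X] [MeasurableSpace X] [BorelSpace X]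
    (hgeo : IsGeodesicSpace X) (ρ : ℝ) (hρ : 0 < ρ) (hb : ExpBounded X ρ) :
    ∃ m : Measure X, IsRadon m ∧ (∀ g : X ≃ᵢ X, Measure.map (⇑g) m = m) ∧
      TemperedOn m (Set.Ici (9 * ρ)) := by
  obtain ⟨a, -, ha⟩ := hb
  obtain ⟨T, -, hT, hTm⟩ := exists_maximal_pairwise (univ : Set X)
    (fun s t => ∀ g : X ≃ᵢ X, 2 * ρ < dist s (g t)) (fun s t h g => by
      have := h g.symm
      rwa [← g.isometry.dist_eq, IsometryEquiv.apply_symm_apply, dist_comm] at this)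
  have h2ρ : 0 < 2 * ρ := by positivity
  set m : Measure X := Measure.sum fun t : T => orbitMeasure (t : X) (2 * ρ) h2ρ with hm
  have hup : ∀ (x : X) (R : ℝ), 0 < R → m (closedBall x R) ≤ (⌊a ^ (R + 1 + ρ)⌋₊ : ℝ≥0∞) := by
    intro x R hR
    rw [hm, Measure.sum_apply _ measurableSet_closedBall]
    exact (ENNReal.tsum_le_tsum fun t => orbitMeasure_closedBall_le _ _ h2ρ x R).trans
      (tsum_orbitLim_le hρ ha x (by positivity) T hT)
  have hlow : ∀ (x : X) (R : ℝ), 9 * ρ ≤ R → 1 ≤ m (closedBall x R) := by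
    intro x R hR
    obtain ⟨t, ht, y, hy, hxy⟩ : ∃ t ∈ T, ∃ y ∈ isomOrbit t, dist x y ≤ 2 * ρ := by
      rcases hTm x (mem_univ x) with h | ⟨t, ht, h⟩
      · exact ⟨x, h, x, ⟨IsometryEquiv.refl X, rfl⟩, by simp [hρ.le]⟩
      · push Not at h
        obtain ⟨g, hg⟩ := h
        exact ⟨t, ht, g t, ⟨g, rfl⟩, hg⟩
    calc (1 : ℝ≥0∞) ≤ orbitMeasure t (2 * ρ) h2ρ (closedBall y (2 * ρ)) :=
          one_le_orbitMeasure t _ h2ρ hy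
      _ ≤ orbitMeasure t (2 * ρ) h2ρ (closedBall x R) := measure_mono
          (closedBall_subset_closedBall' (by rw [dist_comm]; linarith))
      _ ≤ m (closedBall x R) := by
          rw [hm]
          exact Measure.le_sum (fun t : T => orbitMeasure (t : X) (2 * ρ) h2ρ) ⟨t, ht⟩ _
  have hloc : IsLocallyFiniteMeasure m := ⟨fun x => ⟨closedBall x 1,
    closedBall_mem_nhds x one_pos, (hup x 1 one_pos).trans_lt (ENNReal.natCast_lt_top _)⟩⟩
  refine ⟨m, ⟨hloc, inferInstance⟩, fun g => ?_, fun R hR => ?_⟩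
  · have hg : Measurable (⇑g) := g.continuous.measurable
    rw [hm, Measure.map_sum hg.aemeasurable]
    simp_rw [map_orbitMeasure]
  · have hR' : 9 * ρ ≤ R := hR
    -- The maximum with `1` keeps `c ≤ C` valid when `X` is empty.
    exact ⟨1, max 1 (⌊a ^ (R + 1 + ρ)⌋₊ : ℝ≥0∞), one_pos, le_max_left _ _,
      max_lt ENNReal.one_lt_top (ENNReal.natCast_lt_top _),
      fun x => ⟨hlow x R hR', (hup x R (by linarith)).trans (le_max_right _ _)⟩⟩
end

section
/- Let X be a proper, exponentially bounded metric space, let G be a group of bijective isometries of X, and let m be a nonzero G-invariant Radon measure on X whose support is contained in a single orbit G·x₀. Then the critical exponent δ_cr(m) is finite, i.e., there exists δ ≥ 0 and a point o ∈ X (equivalently, any point o ∈ X) such that ∫_X e^{−δ d(o,x)} dm(x) < ∞. -/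
/-!
Comparing orbit points with disjoint balls shows that the measure grows at most exponentially.
In `closedBall x₀ r` choose a subset of the orbit of maximal cardinality among those whose points
are at pairwise distance greater than `2ρ`. The closed `ρ`-balls around its points are disjoint and
contained in `closedBall x₀ (r + ρ)`, so there are at most `a ^ (r + ρ)` of them. By maximality the
closed `2ρ`-balls around its points cover the orbit inside `closedBall x₀ r`, and by invariance each
of them has the same finite measure as `closedBall x₀ (2ρ)`. This gives `measure_closedBall_le`.
Cutting `X` into the shells `n ≤ d(x₀, x) < n + 1` then bounds the integral by a convergent
geometric series as soon as `δ > log a`; changing the base point costs a factor `exp (δ d(o, x₀))`.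
-/

open MeasureTheory Metric Set ENNReal

/-- A set in which the `t`-separated finite subsets have bounded cardinality is covered by the
closed `t`-balls around the points of one of them, namely one of maximal cardinality. -/
lemma exists_separated_cover {X : Type*} [MetricSpace X] (A : Set X) (t K : ℝ) (ht : 0 ≤ t)
    (hK : ∀ s : Finset X, (s : Set X) ⊆ A → ((s : Set X).Pairwise fun y z => t < dist y z) →
      (s.card : ℝ) ≤ K) :
    ∃ s : Finset X, (s : Set X) ⊆ A ∧ ((s : Set X).Pairwise fun y z => t < dist y z) ∧
      A ⊆ ⋃ y ∈ s, closedBall y t := by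
  classical
  let N : Set ℕ := {n | ∃ s : Finset X, (s : Set X) ⊆ A ∧
    ((s : Set X).Pairwise fun y z => t < dist y z) ∧ s.card = n}
  have hne : N.Nonempty := ⟨0, ∅, by simp⟩
  have hbdd : BddAbove N := by
    refine ⟨⌊K⌋₊, ?_⟩
    rintro n ⟨s, hsA, hs, rfl⟩
    exact Nat.le_floor (hK s hsA hs)
  obtain ⟨s, hsA, hs, hcard⟩ := Nat.sSup_mem hne hbdd
  refine ⟨s, hsA, hs, fun x hx => ?_⟩
  by_contra hcon
  simp only [mem_iUnion, mem_closedBall, not_exists, not_le] at hcon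
  have hxs : x ∉ s := fun h => by
    have := hcon x h
    rw [dist_self] at this
    exact this.not_ge ht
  -- Otherwise `insert x s` would be a larger separated subset.
  have hmem : (insert x s).card ∈ N := by
    refine ⟨insert x s, ?_, ?_, rfl⟩
    · rw [Finset.coe_insert]
      exact insert_subset hx hsA
    · rw [Finset.coe_insert]
      refine hs.insert fun y hy _ => ⟨hcon y hy, ?_⟩
      rw [dist_comm]
      exact hcon y hy
  have := le_csSup hbdd hmem
  rw [Finset.card_insert_of_notMem hxs, ← hcard] at this
  omega

lemma measure_closedBall_isometry {X : Type*} [MetricSpace X] [MeasurableSpace X] [BorelSpace X]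
    (m : Measure X) (g : X ≃ᵢ X) (hg : Measure.map (⇑g) m = m) (x : X) (t : ℝ) :
    m (closedBall (g x) t) = m (closedBall x t) := by
  have h : g ⁻¹' closedBall (g x) t = closedBall x t := by
    ext y
    simp
  conv_lhs => rw [← hg]
  rw [Measure.map_apply g.continuous.measurable isClosed_closedBall.measurableSet, h]

lemma measure_closedBall_le {X : Type*} [MetricSpace X] [MeasurableSpace X] [BorelSpace X]
    (ρ a : ℝ) (hρ : 0 < ρ)
    (hb : ∀ (x : X) (r : ℝ), 0 < r → ∀ s : Finset X,
      ((s : Set X).Pairwise fun y z => Disjoint (closedBall y ρ) (closedBall z ρ)) →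
      (∀ y ∈ s, closedBall y ρ ⊆ closedBall x r) → (s.card : ℝ) ≤ a ^ r)
    (G : Subgroup (X ≃ᵢ X)) (m : Measure X) (hinv : ∀ g ∈ G, Measure.map (⇑g) m = m)
    (x₀ : X) (hsupp : m ({x : X | ∃ g ∈ G, g x₀ = x}ᶜ) = 0) (r : ℝ) (hr : 0 ≤ r) :
    m (closedBall x₀ r) ≤ ENNReal.ofReal (a ^ (r + ρ)) * m (closedBall x₀ (2 * ρ)) := by
  set O : Set X := {x : X | ∃ g ∈ G, g x₀ = x}
  have hK : ∀ s : Finset X, (s : Set X) ⊆ closedBall x₀ r ∩ O →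
      ((s : Set X).Pairwise fun y z => 2 * ρ < dist y z) → (s.card : ℝ) ≤ a ^ (r + ρ) := by
    intro s hsA hs
    refine hb x₀ (r + ρ) (by linarith) s (fun y hy z hz hyz => ?_) fun y hy => ?_
    · have := hs hy hz hyz
      exact closedBall_disjoint_closedBall (by linarith)
    · have := mem_closedBall.1 (hsA hy).1
      exact closedBall_subset_closedBall' (by linarith)
  obtain ⟨s, hsA, hs, hcov⟩ := exists_separated_cover _ _ _ (by positivity) hK
  calc m (closedBall x₀ r) ≤ m (closedBall x₀ r ∩ O) + m (closedBall x₀ r \ O) :=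
        measure_le_inter_add_sdiff _ _ _
    _ = m (closedBall x₀ r ∩ O) := by
        rw [measure_mono_null (t := Oᶜ) (s := closedBall x₀ r \ O) (fun x hx => hx.2) hsupp, add_zero]
    _ ≤ m (⋃ y ∈ s, closedBall y (2 * ρ)) := measure_mono hcov
    _ ≤ ∑ y ∈ s, m (closedBall y (2 * ρ)) := measure_biUnion_finset_le _ _
    _ = ∑ _y ∈ s, m (closedBall x₀ (2 * ρ)) := by
        refine Finset.sum_congr rfl fun y hy => ?_
        obtain ⟨g, hg, rfl⟩ := (hsA hy).2
        exact measure_closedBall_isometry m g (hinv g hg) x₀ _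
    _ = (s.card : ℝ≥0∞) * m (closedBall x₀ (2 * ρ)) := by simp
    _ ≤ _ := by
        gcongr
        rw [← ENNReal.ofReal_natCast]
        exact ENNReal.ofReal_le_ofReal (hK s hsA hs)

/-- If balls around `x₀` grow at most like `exp (L r)`, the integral of `exp (-(L + 1) d(x₀, ·))`
converges. -/
lemma lintegral_exp_lt_top {X : Type*} [MetricSpace X] [MeasurableSpace X] [BorelSpace X]
    (m : Measure X) (x₀ : X) (L B : ℝ) (C : ℝ≥0∞) (hL : 0 ≤ L) (hC : C < ⊤)
    (h : ∀ r : ℝ, 0 ≤ r → m (closedBall x₀ r) ≤ ENNReal.ofReal (Real.exp (L * r + B)) * C) :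
    (∫⁻ x, ENNReal.ofReal (Real.exp (-(L + 1) * dist x₀ x)) ∂m) < ⊤ := by
  have hsum : Summable fun n : ℕ => Real.exp (L + B) * Real.exp (-n) :=
    Real.summable_exp_neg_nat.mul_left _
  calc (∫⁻ x, ENNReal.ofReal (Real.exp (-(L + 1) * dist x₀ x)) ∂m)
      ≤ ∫⁻ x, ∑' n : ℕ, (closedBall x₀ ((n : ℝ) + 1)).indicator
          (fun _ => ENNReal.ofReal (Real.exp (-(L + 1) * n))) x ∂m := by
        refine lintegral_mono fun x => ?_
        -- The term for the shell containing `x` already dominates the integrand at `x`.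
        refine le_trans ?_ (ENNReal.le_tsum ⌊dist x₀ x⌋₊)
        have hx : x ∈ closedBall x₀ ((⌊dist x₀ x⌋₊ : ℝ) + 1) := by
          rw [mem_closedBall, dist_comm]
          exact (Nat.lt_floor_add_one _).le
        rw [indicator_of_mem hx]
        have := Nat.floor_le (dist_nonneg : 0 ≤ dist x₀ x)
        refine ENNReal.ofReal_le_ofReal (Real.exp_le_exp.2 ?_)
        nlinarith
    _ = ∑' n : ℕ, ENNReal.ofReal (Real.exp (-(L + 1) * n)) * m (closedBall x₀ ((n : ℝ) + 1)) := by
        rw [lintegral_tsum fun n =>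
          (measurable_const.indicator isClosed_closedBall.measurableSet).aemeasurable]
        simp_rw [lintegral_indicator_const isClosed_closedBall.measurableSet]
    _ ≤ ∑' n : ℕ, ENNReal.ofReal (Real.exp (L + B) * Real.exp (-n)) * C := by
        refine ENNReal.tsum_le_tsum fun n => ?_
        refine (mul_le_mul_right (h (n + 1) (by positivity)) _).trans_eq ?_
        rw [← mul_assoc, ← ENNReal.ofReal_mul (Real.exp_pos _).le, ← Real.exp_add, ← Real.exp_add]
        congr 3
        ring
    _ = ENNReal.ofReal (∑' n : ℕ, Real.exp (L + B) * Real.exp (-n)) * C := by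
        rw [ENNReal.tsum_mul_right, ENNReal.ofReal_tsum_of_nonneg (fun n => by positivity) hsum]
    _ < ⊤ := ENNReal.mul_lt_top ENNReal.ofReal_lt_top hC

/-- If `X` is a proper exponentially bounded metric space, `G` a group of bijective
isometries of `X` and `m` a nonzero `G`-invariant Radon measure supported in a single
orbit `G·x₀`, then the critical exponent of `m` is finite: there is `δ ≥ 0` with
`∫ e^{-δ d(o,x)} dm(x) < ∞` for every point `o ∈ X`. -/
theorem critical_exponent_finite_of_expBounded
    (X : Type*) [MetricSpace X] [ProperSpace X] [MeasurableSpace X] [BorelSpace X]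
    (ρ : ℝ) (hρ : 0 < ρ) (hb : ExpBounded X ρ)
    (G : Subgroup (X ≃ᵢ X)) (m : Measure X) (hm : m ≠ 0) (hRadon : IsRadon m)
    (hinv : ∀ g ∈ G, Measure.map (⇑g) m = m)
    (x₀ : X) (hsupp : m ({x : X | ∃ g ∈ G, g x₀ = x}ᶜ) = 0) :
    ∃ δ : ℝ, 0 ≤ δ ∧ ∀ o : X,
      (∫⁻ x, ENNReal.ofReal (Real.exp (-δ * dist o x)) ∂m) < ⊤ := by
  obtain ⟨a, ha, hb⟩ := hb
  have := hRadon.1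
  -- Replacing `log a` by a nonnegative `L` covers the case `a < 1`.
  set L : ℝ := max (Real.log a) 0
  have hL : 0 ≤ L := le_max_right _ _
  have key := lintegral_exp_lt_top m x₀ L (L * ρ) (m (closedBall x₀ (2 * ρ))) hL
    (isCompact_closedBall x₀ (2 * ρ)).measure_lt_top fun r hr => by
      refine (measure_closedBall_le ρ a hρ hb G m hinv x₀ hsupp r hr).trans ?_
      gcongr
      rw [Real.rpow_def_of_pos ha, ← mul_add]
      gcongr
      exact le_max_left _ _
  refine ⟨L + 1, by linarith, fun o => ?_⟩
  calc (∫⁻ x, ENNReal.ofReal (Real.exp (-(L + 1) * dist o x)) ∂m)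
      ≤ ∫⁻ x, ENNReal.ofReal (Real.exp ((L + 1) * dist o x₀)) *
          ENNReal.ofReal (Real.exp (-(L + 1) * dist x₀ x)) ∂m := by
        refine lintegral_mono fun x => ?_
        rw [← ENNReal.ofReal_mul (Real.exp_pos _).le, ← Real.exp_add]
        refine ENNReal.ofReal_le_ofReal (Real.exp_le_exp.2 ?_)
        have := dist_triangle_left x₀ x o
        nlinarith
    _ = ENNReal.ofReal (Real.exp ((L + 1) * dist o x₀)) *
          ∫⁻ x, ENNReal.ofReal (Real.exp (-(L + 1) * dist x₀ x)) ∂m :=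
        lintegral_const_mul' _ _ ENNReal.ofReal_ne_top
    _ < ⊤ := ENNReal.mul_lt_top ENNReal.ofReal_lt_top key
end

section
/- Let {Z_k}_{k≥1} and {Z'_k}_{k≥1} be two increasing sequences of measurable sets of finite positive measure in a measure space (X,m) such that for a certain integer τ > 0 one has Z_k ⊆ Z'_{k+τ} and Z'_k ⊆ Z_{k+τ} for all k ≥ 1, and let λ_n = (1/n) Σ_{k=1}^n m_{Z_k} and λ'_n = (1/n) Σ_{k=1}^n m_{Z'_k} be the Cesaro averages of the normalized restrictions. Then for all n > τ: ‖λ_n − λ'_n‖ ≤ 2τ/n + (4(n−τ)/n)·[ 1 − ( m(Z_1)/m(Z_{n+τ}) )^{2τ/(n−τ)} ]. -/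
/-!
Both averages are compared set by set. Writing `N = n - τ`, the term `m_{Z_k}` of the first sum is
paired with the term `m_{Z'_{k+τ}}` of the second for `k = 1, …, N`; the `τ` unpaired terms on either
side contribute at most `τ / n` to `|λ_n(A) - λ'_n(A)|`. For `S ⊆ T` the normalized restrictions
satisfy `|m_S(A) - m_T(A)| ≤ 1 - m(S) / m(T)` (`abs_real_div_sub_le`), and
`Z'_{k+τ} ⊆ Z_{k+2τ}`, so the paired terms contribute at most
`∑_{k ≤ N} (1 - m(Z_k) / m(Z_{k+2τ}))`. By the inequality of arithmetic and geometric means together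
with the telescoping of `∏ m(Z_k) / m(Z_{k+2τ})`, this sum is at most
`N (1 - (m(Z_1) / m(Z_{n+τ}))^{2τ/N})` (`sum_one_sub_ratio_le`). Adding the two suprema in the
definition of the total variation distance gives the bound, with the constant `2` in place of `4`.
-/


open MeasureTheory Set ENNReal Filter

/-- The total variation distance between two (finite) measures: the total variation
norm `‖μ - ν‖` of the corresponding signed measure, so that two mutually singular
probability measures are at distance `2`. -/
noncomputable def tvDist {X : Type*} [MeasurableSpace X] (μ ν : Measure X) : ℝ :=
  (⨆ (A : Set X) (_ : MeasurableSet A), ((μ A).toReal - (ν A).toReal)) +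
    (⨆ (A : Set X) (_ : MeasurableSet A), ((ν A).toReal - (μ A).toReal))

/-- The normalized restriction `m_A` of a measure `m` to a set `A` of finite positive
measure. -/
noncomputable def normRestrict {X : Type*} [MeasurableSpace X]
    (m : Measure X) (A : Set X) : Measure X :=
  (m A)⁻¹ • m.restrict A

/-- The Cesaro average `λ_n = (1/n) ∑_{k=1}^n m_{Z_k}` of the normalized restrictions. -/
noncomputable def cesaroAvg {X : Type*} [MeasurableSpace X]
    (m : Measure X) (Z : ℕ → Set X) (n : ℕ) : Measure X :=
  (n : ℝ≥0∞)⁻¹ • ∑ k ∈ Finset.Icc 1 n, normRestrict m (Z k)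

/-- The mass of `A` under a Cesaro average, with the index shifted to start at `0`. -/
lemma cesaroAvg_apply_toReal {X : Type*} [MeasurableSpace X] (m : Measure X) (Z : ℕ → Set X)
    (n : ℕ) (hpos : ∀ k, 1 ≤ k → 0 < m (Z k)) {A : Set X} (hA : MeasurableSet A) :
    (cesaroAvg m Z n A).toReal =
      (∑ k ∈ Finset.range n, m.real (A ∩ Z (k + 1)) / m.real (Z (k + 1))) / n := by
  have hsum : (∑ k ∈ Finset.Icc 1 n, normRestrict m (Z k)) A =
      ∑ k ∈ Finset.range n, (m (Z (k + 1)))⁻¹ * m (A ∩ Z (k + 1)) := by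
    rw [Measure.finsetSum_apply, Finset.range_eq_Ico,
      Finset.sum_Ico_add' (fun k => (m (Z k))⁻¹ * m (A ∩ Z k)) 0 n 1]
    refine Finset.sum_congr rfl fun k _ => ?_
    simp [normRestrict, Measure.restrict_apply hA]
  have hne : ∀ k ∈ Finset.range n, (m (Z (k + 1)))⁻¹ * m (A ∩ Z (k + 1)) ≠ ⊤ := by
    intro k _
    have h0 := (hpos (k + 1) (by omega)).ne'
    have hle : (m (Z (k + 1)))⁻¹ * m (A ∩ Z (k + 1)) ≤ 1 :=
      (mul_le_mul_right (measure_mono inter_subset_right) _).trans (ENNReal.inv_mul_le_one _)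
    exact ne_top_of_le_ne_top one_ne_top hle
  rw [cesaroAvg, Measure.smul_apply, hsum, smul_eq_mul, toReal_mul, toReal_sum hne, toReal_inv,
    toReal_natCast, div_eq_inv_mul]
  congr 1
  refine Finset.sum_congr rfl fun k _ => ?_
  rw [toReal_mul, toReal_inv, div_eq_inv_mul]
  rfl

/-- For `S ⊆ T`, the normalized restrictions to `S` and `T` differ by at most `1 - m(S) / m(T)` on
every set. -/
lemma abs_real_div_sub_le {X : Type*} [MeasurableSpace X] (m : Measure X) {S T A : Set X}
    (hS : MeasurableSet S) (hST : S ⊆ T) (hS0 : 0 < m.real S) (hT : m T ≠ ⊤) :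
    |m.real (A ∩ S) / m.real S - m.real (A ∩ T) / m.real T| ≤ 1 - m.real S / m.real T := by
  have hst : m.real S ≤ m.real T := measureReal_mono hST hT
  have hSfin : m S ≠ ⊤ := ne_top_of_le_ne_top hT (measure_mono hST)
  have hT0 : 0 < m.real T := hS0.trans_le hst
  have hx : m.real (A ∩ S) ≤ m.real S := measureReal_mono inter_subset_right hSfin
  have hx0 : 0 ≤ m.real (A ∩ S) := measureReal_nonneg
  have hxy : m.real (A ∩ S) ≤ m.real (A ∩ T) :=
    measureReal_mono (inter_subset_inter_right _ hST)
      (ne_top_of_le_ne_top hT (measure_mono inter_subset_right))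
  have hyx : m.real (A ∩ T) ≤ m.real (A ∩ S) + (m.real T - m.real S) := by
    rw [← measureReal_sdiff hST hS hT]
    refine (measureReal_mono ?_ ?_).trans (measureReal_union_le _ _)
    · rintro z ⟨hzA, hzT⟩
      by_cases hz : z ∈ S
      · exact Or.inl ⟨hzA, hz⟩
      · exact Or.inr ⟨hzT, hz⟩
    · exact ne_top_of_le_ne_top hT
        (measure_mono (union_subset (inter_subset_right.trans hST) sdiff_subset))
  generalize m.real (A ∩ S) = x at *
  generalize m.real (A ∩ T) = y at *
  generalize m.real S = s at *
  generalize m.real T = t at *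
  rw [abs_le]
  constructor
  · have h1 : y / t ≤ (x + (t - s)) / t := by gcongr
    have h2 : x / t ≤ x / s := by gcongr
    have h3 : (x + (t - s)) / t = x / t + (1 - s / t) := by field_simp
    linarith
  · have h1 : x / t ≤ y / t := by gcongr
    have h2 : x / s - x / t = x / s * (1 - s / t) := by field_simp
    have h3 : s / t ≤ 1 := (div_le_one hT0).2 hst
    have h4 : x / s ≤ 1 := (div_le_one hS0).2 hx
    nlinarith

/-- Two sums of terms in `[0, 1]` compared after shifting one of them by `τ`: each of the `τ`
unpaired terms on either side costs at most `1`, and those of the two sides have opposite signs. -/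
lemma abs_sum_sub_sum_le_of_shift (f g d : ℕ → ℝ) (N τ : ℕ)
    (hf0 : ∀ k, 0 ≤ f k) (hf1 : ∀ k, f k ≤ 1) (hg0 : ∀ k, 0 ≤ g k) (hg1 : ∀ k, g k ≤ 1)
    (hd : ∀ k, |f k - g (k + τ)| ≤ d k) :
    |∑ k ∈ Finset.range (N + τ), f k - ∑ k ∈ Finset.range (N + τ), g k|
      ≤ τ + ∑ k ∈ Finset.range N, d k := by
  have e1 : ∑ k ∈ Finset.range (N + τ), f k =
      ∑ k ∈ Finset.range N, f k + ∑ k ∈ Finset.range τ, f (N + k) := Finset.sum_range_add _ _ _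
  have e2 : ∑ k ∈ Finset.range (N + τ), g k =
      ∑ k ∈ Finset.range τ, g k + ∑ k ∈ Finset.range N, g (k + τ) := by
    rw [add_comm N τ, Finset.sum_range_add]
    simp only [add_comm]
  have h1 : |∑ k ∈ Finset.range N, f k - ∑ k ∈ Finset.range N, g (k + τ)|
      ≤ ∑ k ∈ Finset.range N, d k := by
    rw [← Finset.sum_sub_distrib]
    exact (Finset.abs_sum_le_sum_abs _ _).trans (Finset.sum_le_sum fun k _ => hd k)
  have h2 : |∑ k ∈ Finset.range τ, f (N + k) - ∑ k ∈ Finset.range τ, g k| ≤ τ := by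
    rw [← Finset.sum_sub_distrib]
    refine (Finset.abs_sum_le_sum_abs _ _).trans ?_
    refine (Finset.sum_le_card_nsmul _ _ 1 fun k _ => ?_).trans (by simp)
    rw [abs_le]
    constructor <;> linarith [hf0 (N + k), hf1 (N + k), hg0 k, hg1 k]
  rw [e1, e2]
  rw [abs_le] at *
  constructor <;> linarith [h1.1, h1.2, h2.1, h2.2]

/-- AM-GM for the telescoping ratios `a k / a (k + p)`: their product over `k < N` is
`∏_{k < p} a k / a (N + k)`, which is at least `(a 0 / M) ^ p` when `a 0` and `M` bound `a` below
and above. -/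
lemma sum_one_sub_ratio_le (a : ℕ → ℝ) (M : ℝ) (N p : ℕ) (hN : 0 < N)
    (h0 : 0 < a 0) (hle : ∀ k, a 0 ≤ a k) (hM : ∀ k, k < N + p → a k ≤ M) :
    ∑ k ∈ Finset.range N, (1 - a k / a (k + p)) ≤
      N * (1 - (a 0 / M) ^ ((p : ℝ) / (N : ℝ))) := by
  have hpos : ∀ k, 0 < a k := fun k => h0.trans_le (hle k)
  have hM0 : 0 < M := h0.trans_le (hM 0 (by omega))
  have hNr : (0 : ℝ) < N := by exact_mod_cast hN
  have hprod : ∏ k ∈ Finset.range N, a k / a (k + p) =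
      ∏ k ∈ Finset.range p, a k / a (N + k) := by
    have hA := Finset.prod_range_add a N p
    have hB := Finset.prod_range_add a p N
    rw [add_comm p N, hA] at hB
    rw [Finset.prod_div_distrib, Finset.prod_div_distrib,
      div_eq_div_iff (Finset.prod_ne_zero_iff.2 fun k _ => (hpos _).ne')
        (Finset.prod_ne_zero_iff.2 fun k _ => (hpos _).ne'), hB]
    simp only [add_comm]
  have hge : (a 0 / M) ^ p ≤ ∏ k ∈ Finset.range N, a k / a (k + p) := by
    rw [hprod, ← Finset.card_range p, ← Finset.prod_const, Finset.card_range]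
    refine Finset.prod_le_prod (fun k _ => (div_pos h0 hM0).le) fun k hk => ?_
    have hk' := Finset.mem_range.1 hk
    exact div_le_div₀ (hpos k).le (hle k) (hpos _) (hM _ (by omega))
  have hamgm := Real.geom_mean_le_arith_mean (Finset.range N) (fun _ => (1 : ℝ))
    (fun k => a k / a (k + p)) (fun _ _ => zero_le_one) (by simpa using hN)
    (fun k _ => (div_pos (hpos _) (hpos _)).le)
  simp only [Real.rpow_one, Finset.sum_const, Finset.card_range, nsmul_eq_mul, mul_one,
    one_mul] at hamgm
  have hpow : (a 0 / M) ^ ((p : ℝ) / (N : ℝ)) ≤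
      (∏ k ∈ Finset.range N, a k / a (k + p)) ^ ((N : ℝ)⁻¹) := by
    rw [div_eq_mul_inv (p : ℝ), Real.rpow_mul (div_pos h0 hM0).le, Real.rpow_natCast]
    exact Real.rpow_le_rpow (pow_nonneg (div_pos h0 hM0).le _) hge (by positivity)
  have hfin := hpow.trans hamgm
  rw [le_div_iff₀ hNr] at hfin
  rw [Finset.sum_sub_distrib]
  simp only [Finset.sum_const, Finset.card_range, nsmul_eq_mul, mul_one]
  linarith

lemma tvDist_le_of_forall {X : Type*} [MeasurableSpace X] (μ ν : Measure X) (C : ℝ) (hC : 0 ≤ C)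
    (h : ∀ A, MeasurableSet A → |(μ A).toReal - (ν A).toReal| ≤ C) : tvDist μ ν ≤ C + C := by
  unfold tvDist
  refine add_le_add ?_ ?_
  · exact Real.iSup_le (fun A => Real.iSup_le (fun hA => (abs_le.1 (h A hA)).2) hC) hC
  · refine Real.iSup_le (fun A => Real.iSup_le (fun hA => ?_) hC) hC
    linarith [(abs_le.1 (h A hA)).1]

/-- For `τ`-sandwiched increasing sequences of sets of finite positive measure and
all `n > τ`:
`‖λ_n - λ'_n‖ ≤ 2τ/n + (4(n-τ)/n)(1 - (m(Z_1)/m(Z_{n+τ}))^{2τ/(n-τ)})`. -/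
theorem tvDist_cesaroAvg_sandwich
    {X : Type*} [MeasurableSpace X] (m : Measure X) (Z Z' : ℕ → Set X)
    (hZm : ∀ k, MeasurableSet (Z k)) (hZ'm : ∀ k, MeasurableSet (Z' k))
    (hZpos : ∀ k, 1 ≤ k → 0 < m (Z k)) (hZfin : ∀ k, 1 ≤ k → m (Z k) < ⊤)
    (hZ'pos : ∀ k, 1 ≤ k → 0 < m (Z' k)) (hZ'fin : ∀ k, 1 ≤ k → m (Z' k) < ⊤)
    (hZmono : ∀ k, 1 ≤ k → Z k ⊆ Z (k + 1)) (hZ'mono : ∀ k, 1 ≤ k → Z' k ⊆ Z' (k + 1))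
    (τ : ℕ) (hτ : 0 < τ)
    (hsand : ∀ k, 1 ≤ k → Z k ⊆ Z' (k + τ) ∧ Z' k ⊆ Z (k + τ)) :
    ∀ n : ℕ, τ < n →
      tvDist (cesaroAvg m Z n) (cesaroAvg m Z' n)
        ≤ 2 * (τ : ℝ) / (n : ℝ) +
          4 * ((n : ℝ) - (τ : ℝ)) / (n : ℝ) *
            (1 - ((m (Z 1)).toReal / (m (Z (n + τ))).toReal)
              ^ (2 * (τ : ℝ) / ((n : ℝ) - (τ : ℝ)))) := by
  intro n hn
  obtain ⟨N, rfl⟩ : ∃ N, n = N + τ := ⟨n - τ, by omega⟩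
  have hN : 0 < N := by omega
  have hNr : (0 : ℝ) < N := by exact_mod_cast hN
  have hmono : ∀ i j, i ≤ j → Z (i + 1) ⊆ Z (j + 1) := fun i j hij =>
    monotone_nat_of_le_succ (f := fun k => Z (k + 1)) (fun k => hZmono (k + 1) (by omega)) hij
  have hpos : ∀ k, 0 < m.real (Z (k + 1)) := fun k =>
    toReal_pos (hZpos _ (by omega)).ne' (hZfin _ (by omega)).ne
  have hpos' : ∀ k, 0 < m.real (Z' (k + 1)) := fun k =>
    toReal_pos (hZ'pos _ (by omega)).ne' (hZ'fin _ (by omega)).ne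
  have hrmono : ∀ i j, i ≤ j → m.real (Z (i + 1)) ≤ m.real (Z (j + 1)) := fun i j hij =>
    measureReal_mono (hmono i j hij) (hZfin _ (by omega)).ne
  set r : ℝ := (m.real (Z 1) / m.real (Z (N + τ + τ))) ^ (((2 * τ : ℕ) : ℝ) / (N : ℝ)) with hr
  have hlast : ∀ k, k < N + 2 * τ → m.real (Z (k + 1)) ≤ m.real (Z (N + τ + τ)) := by
    intro k hk
    have := hrmono k (N + τ + τ - 1) (by omega)
    rwa [Nat.sub_add_cancel (by omega)] at this
  have hsum := sum_one_sub_ratio_le (fun k => m.real (Z (k + 1))) (m.real (Z (N + τ + τ))) N (2 * τ)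
    hN (hpos 0) (fun k => hrmono 0 k (by omega)) hlast
  simp only [zero_add, ← hr] at hsum
  have hr1 : r ≤ 1 := by
    refine Real.rpow_le_one (by positivity) ?_ (by positivity)
    exact div_le_one_of_le₀ (hlast 0 (by omega)) measureReal_nonneg
  have hset : ∀ A, MeasurableSet A →
      |(cesaroAvg m Z (N + τ) A).toReal - (cesaroAvg m Z' (N + τ) A).toReal|
        ≤ (τ + N * (1 - r)) / ((N + τ : ℕ) : ℝ) := by
    intro A hA
    rw [cesaroAvg_apply_toReal m Z _ hZpos hA, cesaroAvg_apply_toReal m Z' _ hZ'pos hA, ← sub_div,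
      abs_div, Nat.abs_cast]
    gcongr
    refine (abs_sum_sub_sum_le_of_shift _ _
      (fun k => 1 - m.real (Z (k + 1)) / m.real (Z (k + 2 * τ + 1))) N τ
      (fun k => by positivity) (fun k => ?_) (fun k => by positivity) (fun k => ?_)
      fun k => ?_).trans (by linarith)
    · exact div_le_one_of_le₀
        (measureReal_mono inter_subset_right (hZfin _ (by omega)).ne) measureReal_nonneg
    · exact div_le_one_of_le₀
        (measureReal_mono inter_subset_right (hZ'fin _ (by omega)).ne) measureReal_nonneg
    · have hs1 : Z (k + 1) ⊆ Z' (k + τ + 1) := by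
        have := (hsand (k + 1) (by omega)).1
        rwa [show k + 1 + τ = k + τ + 1 by omega] at this
      have hs2 : Z' (k + τ + 1) ⊆ Z (k + 2 * τ + 1) := by
        have := (hsand (k + τ + 1) (by omega)).2
        rwa [show k + τ + 1 + τ = k + 2 * τ + 1 by omega] at this
      refine (abs_real_div_sub_le m (hZm _) hs1 (hpos k) (hZ'fin _ (by omega)).ne).trans ?_
      have hle : m.real (Z' (k + τ + 1)) ≤ m.real (Z (k + 2 * τ + 1)) :=
        measureReal_mono hs2 (hZfin _ (by omega)).ne
      exact sub_le_sub_left (div_le_div_of_nonneg_left measureReal_nonneg (hpos' _) hle) _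
  have hnonneg : 0 ≤ (N : ℝ) * (1 - r) := mul_nonneg hNr.le (by linarith)
  refine (tvDist_le_of_forall _ _ _ (by positivity) hset).trans ?_
  have hexp : ((m (Z 1)).toReal / (m (Z (N + τ + τ))).toReal) ^
      (2 * (τ : ℝ) / (((N + τ : ℕ) : ℝ) - (τ : ℝ))) = r := by
    rw [hr]
    push_cast
    rw [add_sub_cancel_right]
    rfl
  rw [hexp, div_mul_eq_mul_div, ← add_div, ← add_div]
  refine div_le_div_of_nonneg_right ?_ (Nat.cast_nonneg _)
  push_cast
  linarith
end

section
/- Let {Z_k}_{k≥1} and {Z'_k}_{k≥1} be two increasing sequences of measurable sets of finite positive measure in a measure space (X,m) such that for a certain integer τ > 0 one has Z_k ⊆ Z'_{k+τ} and Z'_k ⊆ Z_{k+τ} for all k ≥ 1, and let λ_n = (1/n) Σ_{k=1}^n m_{Z_k} and λ'_n = (1/n) Σ_{k=1}^n m_{Z'_k} be the Cesaro averages of the normalized restrictions. If the growth of the sets Z_n with respect to m is subexponential, i.e., (m(Z_n))^{1/n} → 1 as n → ∞, then ‖λ_n − λ'_n‖ → 0. -/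
/-!
Write `a k = m (Z k)`. For `A ⊆ B` of finite positive measure and any `E`,
`m_A E - m_B E ≤ 1 - m A / m B ≤ log (m B) - log (m A)`. Applied to `Z k ⊆ Z' (k + τ)`, together
with `Z' (k + τ) ⊆ Z (k + 2τ)`, this gives
`m_{Z k} E - m_{Z' (k + τ)} E ≤ log a (k + 2τ) - log a k`.
Summed over `k ≤ n`, the right-hand side telescopes to a sum of `2τ` terms, each `o(n)` because
subexponential growth says `log a n = o(n)`; replacing `Z' (k + τ)` by `Z' k` on the left costs at
most `τ`. After division by `n` this bounds `λ_n E - λ'_n E` uniformly in `E`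
(`sum_relMeas_sub_le`). Passing to complements bounds `λ'_n E - λ_n E` by the same quantity, the
averages being probability measures.
-/

open MeasureTheory Set ENNReal Filter

/-- The real number `m_A E = m (E ∩ A) / m A`. -/
noncomputable def relMeas {X : Type*} [MeasurableSpace X] (m : Measure X) (A E : Set X) : ℝ :=
  (m (E ∩ A)).toReal / (m A).toReal

lemma relMeas_nonneg {X : Type*} [MeasurableSpace X] (m : Measure X) (A E : Set X) :
    0 ≤ relMeas m A E := by
  unfold relMeas; positivity

lemma relMeas_le_one {X : Type*} [MeasurableSpace X] (m : Measure X) (A E : Set X)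
    (hA : m A < ⊤) : relMeas m A E ≤ 1 := by
  unfold relMeas
  exact div_le_one_of_le₀ (ENNReal.toReal_mono hA.ne (measure_mono inter_subset_right))
    ENNReal.toReal_nonneg

lemma relMeas_compl {X : Type*} [MeasurableSpace X] (m : Measure X) (A E : Set X)
    (hE : MeasurableSet E) (hA : m A < ⊤) (hA0 : 0 < m A) :
    relMeas m A Eᶜ = 1 - relMeas m A E := by
  have h : (m A).toReal = (m (E ∩ A)).toReal + (m (Eᶜ ∩ A)).toReal := by
    rw [← ENNReal.toReal_add (measure_lt_top_mono inter_subset_right hA).ne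
      (measure_lt_top_mono inter_subset_right hA).ne, ← measure_inter_add_sdiff A hE,
      inter_comm A E, sdiff_eq, inter_comm A Eᶜ]
  have h0 : 0 < (m A).toReal := ENNReal.toReal_pos hA0.ne' hA.ne
  unfold relMeas
  rw [eq_sub_iff_add_eq, ← add_div, add_comm, ← h, div_self h0.ne']

lemma relMeas_sub_le_log {X : Type*} [MeasurableSpace X] (m : Measure X) {A B : Set X}
    (E : Set X) (hAB : A ⊆ B) (hA0 : 0 < m A) (hB : m B < ⊤) :
    relMeas m A E - relMeas m B E ≤ Real.log (m B).toReal - Real.log (m A).toReal := by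
  have hA : m A < ⊤ := measure_lt_top_mono hAB hB
  have ha : 0 < (m A).toReal := ENNReal.toReal_pos hA0.ne' hA.ne
  have hab : (m A).toReal ≤ (m B).toReal := ENNReal.toReal_mono hB.ne (measure_mono hAB)
  have hb : 0 < (m B).toReal := ha.trans_le hab
  have h1 : (m (E ∩ A)).toReal / (m B).toReal ≤ relMeas m B E := by
    unfold relMeas
    gcongr
    · exact (measure_lt_top_mono inter_subset_right hB).ne
  have h2 : (m (E ∩ A)).toReal / (m B).toReal
      = relMeas m A E * ((m A).toReal / (m B).toReal) := by
    unfold relMeas; field_simp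
  have h3 := Real.log_le_sub_one_of_pos (div_pos ha hb)
  rw [Real.log_div ha.ne' hb.ne'] at h3
  have h4 : (m A).toReal / (m B).toReal ≤ 1 := (div_le_one hb).2 hab
  nlinarith [relMeas_le_one m A E hA]

lemma toReal_cesaroAvg {X : Type*} [MeasurableSpace X] (m : Measure X) (Z : ℕ → Set X)
    (hpos : ∀ k, 1 ≤ k → 0 < m (Z k)) (n : ℕ) (E : Set X) (hE : MeasurableSet E) :
    (cesaroAvg m Z n E).toReal = (∑ i ∈ Finset.range n, relMeas m (Z (i + 1)) E) / n := by
  have hr : Finset.Icc 1 n = Finset.Ico 1 (n + 1) := by ext; simp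
  have hfin : ∀ i ∈ Finset.range n, normRestrict m (Z (1 + i)) E ≠ ⊤ := by
    intro i _
    simp only [normRestrict, Measure.smul_apply, smul_eq_mul, Measure.restrict_apply hE]
    -- when `m (Z k) = ⊤` the factor `(m (Z k))⁻¹` is `0`, and `0 * ⊤ = 0`
    by_cases ht : m (Z (1 + i)) = ⊤
    · simp [ht]
    · exact ENNReal.mul_ne_top (ENNReal.inv_ne_top.2 (hpos _ (by omega)).ne')
        (measure_lt_top_mono inter_subset_right (lt_top_iff_ne_top.2 ht)).ne
  unfold cesaroAvg
  rw [Measure.smul_apply, Measure.finsetSum_apply, smul_eq_mul, hr, Finset.sum_Ico_eq_sum_range,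
    ENNReal.toReal_mul, Nat.add_sub_cancel, ENNReal.toReal_sum hfin, ENNReal.toReal_inv,
    ENNReal.toReal_natCast, inv_mul_eq_div]
  congr 1
  refine Finset.sum_congr rfl fun i _ => ?_
  simp only [normRestrict, Measure.smul_apply, smul_eq_mul, Measure.restrict_apply hE,
    ENNReal.toReal_mul, ENNReal.toReal_inv, relMeas, inv_mul_eq_div, add_comm]

lemma sum_range_shift_sub (g : ℕ → ℝ) (n t : ℕ) :
    ∑ i ∈ Finset.range n, (g (i + t) - g i) = ∑ j ∈ Finset.range t, (g (n + j) - g j) := by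
  have h1 := Finset.sum_range_add g n t
  have h2 := Finset.sum_range_add g t n
  rw [add_comm t n] at h2
  simp only [add_comm t] at h2
  rw [Finset.sum_sub_distrib, Finset.sum_sub_distrib]
  linarith

/-- The one-sided estimate behind the theorem: the bound does not depend on `E` and is `o(n)`
under subexponential growth. -/
lemma sum_relMeas_sub_le {X : Type*} [MeasurableSpace X] (m : Measure X) (Z Z' : ℕ → Set X)
    (hZpos : ∀ k, 1 ≤ k → 0 < m (Z k)) (hZfin : ∀ k, 1 ≤ k → m (Z k) < ⊤)
    (hZ'pos : ∀ k, 1 ≤ k → 0 < m (Z' k)) (hZ'fin : ∀ k, 1 ≤ k → m (Z' k) < ⊤)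
    (τ : ℕ) (hsand : ∀ k, 1 ≤ k → Z k ⊆ Z' (k + τ) ∧ Z' k ⊆ Z (k + τ)) (n : ℕ) (E : Set X) :
    ∑ i ∈ Finset.range n, relMeas m (Z (i + 1)) E
      - ∑ i ∈ Finset.range n, relMeas m (Z' (i + 1)) E ≤
    ∑ j ∈ Finset.range (2 * τ),
      (Real.log (m (Z (n + j + 1))).toReal - Real.log (m (Z (j + 1))).toReal) + τ := by
  have h1 : ∑ i ∈ Finset.range n, (relMeas m (Z (i + 1)) E - relMeas m (Z' (i + τ + 1)) E) ≤
      ∑ i ∈ Finset.range n,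
        (Real.log (m (Z (i + 2 * τ + 1))).toReal - Real.log (m (Z (i + 1))).toReal) := by
    refine Finset.sum_le_sum fun i _ => ?_
    have hs1 : Z (i + 1) ⊆ Z' (i + τ + 1) := by
      have := (hsand (i + 1) (by omega)).1
      rwa [show i + 1 + τ = i + τ + 1 by omega] at this
    have hs2 : Z' (i + τ + 1) ⊆ Z (i + 2 * τ + 1) := by
      have := (hsand (i + τ + 1) (by omega)).2
      rwa [show i + τ + 1 + τ = i + 2 * τ + 1 by omega] at this
    refine (relMeas_sub_le_log m E hs1 (hZpos _ (by omega)) (hZ'fin _ (by omega))).trans ?_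
    have := Real.log_le_log
      (ENNReal.toReal_pos (hZ'pos (i + τ + 1) (by omega)).ne' (hZ'fin _ (by omega)).ne)
      (ENNReal.toReal_mono (hZfin (i + 2 * τ + 1) (by omega)).ne (measure_mono hs2))
    linarith
  rw [sum_range_shift_sub (fun k => Real.log (m (Z (k + 1))).toReal)] at h1
  have h2 := sum_range_shift_sub (fun k => relMeas m (Z' (k + 1)) E) n τ
  have h3 : ∑ j ∈ Finset.range τ, (relMeas m (Z' (n + j + 1)) E - relMeas m (Z' (j + 1)) E)
      ≤ τ := by
    refine (Finset.sum_le_card_nsmul _ _ 1 fun j _ => ?_).trans (by simp)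
    linarith [relMeas_le_one m (Z' (n + j + 1)) E (hZ'fin _ (by omega)),
      relMeas_nonneg m (Z' (j + 1)) E]
  rw [Finset.sum_sub_distrib] at h1 h2
  linarith

lemma tvDist_nonneg {X : Type*} [MeasurableSpace X] (μ ν : Measure X) : 0 ≤ tvDist μ ν := by
  have h : ∀ μ ν : Measure X,
      0 ≤ ⨆ (A : Set X) (_ : MeasurableSet A), ((μ A).toReal - (ν A).toReal) := fun μ ν =>
    Real.iSup_nonneg' ⟨∅, Real.iSup_nonneg' ⟨MeasurableSet.empty, by simp⟩⟩
  exact add_nonneg (h μ ν) (h ν μ)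

lemma tvDist_le {X : Type*} [MeasurableSpace X] (μ ν : Measure X) (c : ℝ)
    (h1 : ∀ A, MeasurableSet A → (μ A).toReal - (ν A).toReal ≤ c)
    (h2 : ∀ A, MeasurableSet A → (ν A).toReal - (μ A).toReal ≤ c) : tvDist μ ν ≤ c + c := by
  have hc : 0 ≤ c := by simpa using h1 ∅ MeasurableSet.empty
  exact add_le_add (Real.iSup_le (fun A => Real.iSup_le (h1 A) hc) hc)
    (Real.iSup_le (fun A => Real.iSup_le (h2 A) hc) hc)

/-- If `x n ^ (1 / n) → 1` with `x n > 0`, then `log (x (n + c)) = o(n)` for every shift `c`. -/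
lemma tendsto_log_shift_div (x : ℕ → ℝ) (hx : ∀ k, 1 ≤ k → 0 < x k)
    (h : Tendsto (fun n : ℕ => x n ^ (1 / (n : ℝ))) atTop (nhds 1)) (c : ℕ) :
    Tendsto (fun n : ℕ => Real.log (x (n + c)) / n) atTop (nhds 0) := by
  have h1 : Tendsto (fun n : ℕ => Real.log (x n) / n) atTop (nhds 0) := by
    have := h.log one_ne_zero
    rw [Real.log_one] at this
    refine this.congr' ?_
    filter_upwards [eventually_ge_atTop 1] with n hn
    rw [Real.log_rpow (hx n hn)]; ring
  have h2 := h1.comp (tendsto_add_atTop_nat c)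
  have h3 : Tendsto (fun n : ℕ => 1 + (c : ℝ) / n) atTop (nhds (1 + 0)) :=
    tendsto_const_nhds.add (tendsto_const_div_atTop_nhds_zero_nat (c : ℝ))
  have h4 := h2.mul h3
  rw [zero_mul] at h4
  refine h4.congr' ?_
  filter_upwards [eventually_ge_atTop 1] with n hn
  have hn' : (0 : ℝ) < n := by exact_mod_cast hn
  have hnc : (0 : ℝ) < n + c := by positivity
  simp only [Function.comp, Nat.cast_add]
  field_simp

/-- If the growth of the sets `Z_n` is subexponential, i.e. `(m Z_n)^{1/n} → 1`, then
the Cesaro averages of the normalized restrictions of two `τ`-sandwiched increasing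
sequences of sets satisfy `‖λ_n - λ'_n‖ → 0`. -/
theorem tvDist_cesaroAvg_tendsto_zero_of_subexponential
    {X : Type*} [MeasurableSpace X] (m : Measure X) (Z Z' : ℕ → Set X)
    (hZm : ∀ k, MeasurableSet (Z k)) (hZ'm : ∀ k, MeasurableSet (Z' k))
    (hZpos : ∀ k, 1 ≤ k → 0 < m (Z k)) (hZfin : ∀ k, 1 ≤ k → m (Z k) < ⊤)
    (hZ'pos : ∀ k, 1 ≤ k → 0 < m (Z' k)) (hZ'fin : ∀ k, 1 ≤ k → m (Z' k) < ⊤)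
    (hZmono : ∀ k, 1 ≤ k → Z k ⊆ Z (k + 1)) (hZ'mono : ∀ k, 1 ≤ k → Z' k ⊆ Z' (k + 1))
    (τ : ℕ) (hτ : 0 < τ)
    (hsand : ∀ k, 1 ≤ k → Z k ⊆ Z' (k + τ) ∧ Z' k ⊆ Z (k + τ))
    (hsub : Filter.Tendsto (fun n : ℕ => (m (Z n)).toReal ^ (1 / (n : ℝ)))
      Filter.atTop (nhds 1)) :
    Filter.Tendsto (fun n : ℕ => tvDist (cesaroAvg m Z n) (cesaroAvg m Z' n))
      Filter.atTop (nhds 0) := by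
  set B : ℕ → ℝ := fun n => (∑ j ∈ Finset.range (2 * τ),
      (Real.log (m (Z (n + j + 1))).toReal - Real.log (m (Z (j + 1))).toReal) + τ) / n with hB
  have hBlim : Tendsto B atTop (nhds 0) := by
    have hx : ∀ k, 1 ≤ k → 0 < (m (Z k)).toReal := fun k hk =>
      ENNReal.toReal_pos (hZpos k hk).ne' (hZfin k hk).ne
    have h1 := tendsto_finsetSum (Finset.range (2 * τ)) fun j _ =>
      (tendsto_log_shift_div _ hx hsub (j + 1)).sub
        (tendsto_const_div_atTop_nhds_zero_nat (Real.log (m (Z (j + 1))).toReal))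
    have h2 := h1.add (tendsto_const_div_atTop_nhds_zero_nat (τ : ℝ))
    simp only [sub_zero, Finset.sum_const_zero, add_zero] at h2
    refine h2.congr fun n => ?_
    simp only [hB, add_div, Finset.sum_div, sub_div, add_assoc]
  have h1 : ∀ n A, MeasurableSet A →
      (cesaroAvg m Z n A).toReal - (cesaroAvg m Z' n A).toReal ≤ B n := by
    intro n A hA
    rw [toReal_cesaroAvg m Z hZpos n A hA, toReal_cesaroAvg m Z' hZ'pos n A hA, ← sub_div]
    exact div_le_div_of_nonneg_right
      (sum_relMeas_sub_le m Z Z' hZpos hZfin hZ'pos hZ'fin τ hsand n A) n.cast_nonneg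
  have h2 : ∀ n A, MeasurableSet A →
      (cesaroAvg m Z' n A).toReal - (cesaroAvg m Z n A).toReal ≤ B n := by
    intro n A hA
    refine le_trans (le_of_eq ?_) (h1 n Aᶜ hA.compl)
    rw [toReal_cesaroAvg m Z hZpos n A hA, toReal_cesaroAvg m Z' hZ'pos n A hA,
      toReal_cesaroAvg m Z hZpos n _ hA.compl, toReal_cesaroAvg m Z' hZ'pos n _ hA.compl,
      Finset.sum_congr rfl fun i _ => relMeas_compl m (Z (i + 1)) A hA
        (hZfin _ (by omega)) (hZpos _ (by omega)),
      Finset.sum_congr rfl fun i _ => relMeas_compl m (Z' (i + 1)) A hA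
        (hZ'fin _ (by omega)) (hZ'pos _ (by omega)),
      Finset.sum_sub_distrib, Finset.sum_sub_distrib]
    ring
  exact squeeze_zero (fun n => tvDist_nonneg _ _) (fun n => tvDist_le _ _ _ (h1 n) (h2 n))
    (by simpa using hBlim.add hBlim)
end

section
/- Let {Z_k}_{k≥1} and {Z'_k}_{k≥1} be two increasing sequences of measurable sets of finite positive measure in a measure space (X,m) such that for a certain integer τ > 0 one has Z_k ⊆ Z'_{k+τ} and Z'_k ⊆ Z_{k+τ} for all k ≥ 1. Then for every k > τ: ‖m_{Z_k} − m_{Z'_k}‖ ≤ 4·( 1 − m(Z_{k−τ})/m(Z_{k+τ}) ). -/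
/-!
Put `W = Z (k - τ)` and `V = Z (k + τ)`. Both `Z k` and `Z' k` lie between `W` and `V`. For
any sets `W ⊆ A, B ⊆ V` of finite positive measure, `W` measurable, and any measurable `S`, with
`x = m (S ∩ W) ≤ m W`,
`m_A S ≤ x / m A + (1 - m W / m A)` and `m_B S ≥ x / m V`, so
`m_A S - m_B S ≤ x * (1 / m A - 1 / m V) + 1 - m W / m A ≤ 1 - m W / m V`,
the last step by `x ≤ m W` and `m A ≤ m V`. Applying this to `(Z k, Z' k)` and to `(Z' k, Z k)`
bounds the total variation by `2 * (1 - m W / m V)`, which is stronger than the claim.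
-/

open MeasureTheory Set ENNReal Filter

lemma normRestrict_toReal {X : Type*} [MeasurableSpace X] (m : Measure X) (A S : Set X)
    (hS : MeasurableSet S) :
    (normRestrict m A S).toReal = m.real (S ∩ A) / m.real A := by
  simp [normRestrict, Measure.restrict_apply hS, Measure.real, ENNReal.toReal_mul,
    ENNReal.toReal_inv, div_eq_inv_mul]

/-- Normalized restrictions to two sets lying between `W` and `V` differ on each measurable set
by at most `1 - m W / m V`. -/
lemma normRestrict_sub_le {X : Type*} [MeasurableSpace X] (m : Measure X) {W A B V : Set X}
    (hW : MeasurableSet W) (hWA : W ⊆ A) (hWB : W ⊆ B)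
    (hAV : A ⊆ V) (hBV : B ⊆ V) (hW0 : 0 < m W) (hV : m V < ⊤) (S : Set X)
    (hS : MeasurableSet S) :
    (normRestrict m A S).toReal - (normRestrict m B S).toReal ≤
      1 - (m W).toReal / (m V).toReal := by
  rw [normRestrict_toReal m A S hS, normRestrict_toReal m B S hS]
  change _ ≤ 1 - m.real W / m.real V
  have hA : m A ≠ ⊤ := ((measure_mono hAV).trans_lt hV).ne
  have hB : m B ≠ ⊤ := ((measure_mono hBV).trans_lt hV).ne
  have hWf : m W ≠ ⊤ := ((measure_mono hWA).trans_lt hA.lt_top).ne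
  have w0 : 0 < m.real W := ENNReal.toReal_pos hW0.ne' hWf
  have wa : m.real W ≤ m.real A := measureReal_mono hWA hA
  have wb : m.real W ≤ m.real B := measureReal_mono hWB hB
  have av : m.real A ≤ m.real V := measureReal_mono hAV hV.ne
  have bv : m.real B ≤ m.real V := measureReal_mono hBV hV.ne
  have xw : m.real (S ∩ W) ≤ m.real W := measureReal_mono inter_subset_right hWf
  have xb : m.real (S ∩ W) ≤ m.real (S ∩ B) :=
    measureReal_mono (inter_subset_inter_right S hWB)
      ((measure_mono inter_subset_right).trans_lt hB.lt_top).ne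
  have pa : m.real (S ∩ A) ≤ m.real (S ∩ W) + (m.real A - m.real W) := by
    have hsub : S ∩ A ⊆ (S ∩ W) ∪ (A \ W) := by
      intro y hy
      by_cases h : y ∈ W
      · exact Or.inl ⟨hy.1, h⟩
      · exact Or.inr ⟨hy.2, h⟩
    have hfin : m ((S ∩ W) ∪ (A \ W)) ≠ ⊤ :=
      ((measure_mono (union_subset (inter_subset_right.trans hWA) sdiff_subset)).trans_lt
        hA.lt_top).ne
    calc m.real (S ∩ A) ≤ m.real ((S ∩ W) ∪ (A \ W)) := measureReal_mono hsub hfin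
      _ ≤ m.real (S ∩ W) + m.real (A \ W) := measureReal_union_le _ _
      _ = _ := by rw [measureReal_sdiff hWA hW hA]
  have x0 : 0 ≤ m.real (S ∩ W) := measureReal_nonneg
  generalize m.real W = w at *
  generalize m.real A = a at *
  generalize m.real B = b at *
  generalize m.real V = v at *
  generalize m.real (S ∩ W) = x at *
  have a0 : 0 < a := w0.trans_le wa
  have b0 : 0 < b := w0.trans_le wb
  have h1 : m.real (S ∩ A) / a ≤ (x + (a - w)) / a := by gcongr
  have h2 : x / v ≤ m.real (S ∩ B) / b := by gcongr
  have h3 : (w - x) * (1 / v) ≤ (w - x) * (1 / a) :=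
    mul_le_mul_of_nonneg_left (one_div_le_one_div_of_le a0 av) (sub_nonneg.2 xw)
  have h4 : (x + (a - w)) / a = 1 - (w - x) * (1 / a) := by
    field_simp
    ring
  have h5 : x / v = w / v - (w - x) * (1 / v) := by ring
  linarith

/-- Sandwiched increasing sequences of sets: `‖m_{Z_k} - m_{Z'_k}‖ ≤
4 (1 - m(Z_{k-τ})/m(Z_{k+τ}))` for all `k > τ`. -/
theorem tvDist_normRestrict_sandwich
    {X : Type*} [MeasurableSpace X] (m : Measure X) (Z Z' : ℕ → Set X)
    (hZm : ∀ k, MeasurableSet (Z k)) (hZ'm : ∀ k, MeasurableSet (Z' k))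
    (hZpos : ∀ k, 1 ≤ k → 0 < m (Z k)) (hZfin : ∀ k, 1 ≤ k → m (Z k) < ⊤)
    (hZ'pos : ∀ k, 1 ≤ k → 0 < m (Z' k)) (hZ'fin : ∀ k, 1 ≤ k → m (Z' k) < ⊤)
    (hZmono : ∀ k, 1 ≤ k → Z k ⊆ Z (k + 1)) (hZ'mono : ∀ k, 1 ≤ k → Z' k ⊆ Z' (k + 1))
    (τ : ℕ) (hτ : 0 < τ)
    (hsand : ∀ k, 1 ≤ k → Z k ⊆ Z' (k + τ) ∧ Z' k ⊆ Z (k + τ)) :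
    ∀ k, τ < k →
      tvDist (normRestrict m (Z k)) (normRestrict m (Z' k))
        ≤ 4 * (1 - (m (Z (k - τ))).toReal / (m (Z (k + τ))).toReal) := by
  intro k hk
  have hmono : ∀ i j, 1 ≤ i → i ≤ j → Z i ⊆ Z j := by
    intro i j hi hij
    induction j, hij using Nat.le_induction with
    | base => exact subset_rfl
    | succ n hn ih => exact ih.trans (hZmono n (hi.trans hn))
  have hk1 : 1 ≤ k - τ := by omega
  have hWA := hmono (k - τ) k hk1 (by omega)
  have hAV := hmono k (k + τ) (by omega) (by omega)
  have hWB := (hsand (k - τ) hk1).1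
  rw [Nat.sub_add_cancel hk.le] at hWB
  have hBV := (hsand k (by omega)).2
  have hW0 := hZpos (k - τ) hk1
  have hV := hZfin (k + τ) (by omega)
  have hc : 0 ≤ 1 - (m (Z (k - τ))).toReal / (m (Z (k + τ))).toReal :=
    sub_nonneg.2 (div_le_one_of_le₀
      (ENNReal.toReal_mono hV.ne (measure_mono (hWA.trans hAV))) ENNReal.toReal_nonneg)
  have h1 := normRestrict_sub_le m (hZm (k - τ)) hWA hWB hAV hBV hW0 hV
  have h2 := normRestrict_sub_le m (hZm (k - τ)) hWB hWA hBV hAV hW0 hV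
  -- The real supremum over an empty index is `0`, so nonnegativity of the bound is also needed.
  have s1 := Real.iSup_le (fun S => Real.iSup_le (h1 S) hc) hc
  have s2 := Real.iSup_le (fun S => Real.iSup_le (h2 S) hc) hc
  unfold tvDist
  linarith
end

section
/- Let (Y,d_Y) be a metric space and define on X = ℝ × Y the function d_X((t1,y1),(t2,y2)) = d_ℍ( i·e^{t1}, d_Y(y1,y2) + i·e^{t2} ). Then d_X is a metric on X, and if (Y,d_Y) is complete, then (X,d_X) is a complete metric space. -/
/-!
By translation invariance and the explicit formula for `cosh` of the hyperbolic distance, the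
distance between `a + i·e^s` and `b + i·e^t` depends only on `s`, `t`, `|a - b|`, and it is
nondecreasing in `|a - b|` (`dist_hypPoint_le`). Monotonicity replaces `d_Y(y₁,y₃)` by
`d_Y(y₁,y₂) + d_Y(y₂,y₃)`, so the triangle inequality for `hypDist` follows from the one in `ℍ`
applied to `i·e^{t₁}`, `d_Y(y₁,y₂) + i·e^{t₂}` and `d_Y(y₁,y₂) + d_Y(y₂,y₃) + i·e^{t₃}`.

For completeness, `|t₁ - t₂| ≤ hypDist` and `d_Y(y₁,y₂) ≤ e^{t₂} (exp hypDist - 1)`. Hence along a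
`hypDist`-Cauchy sequence the real coordinates are Cauchy, in particular bounded above, and then
the `Y`-coordinates are Cauchy too. The bound
`hypDist ≤ |t₁ - t₂| + d_Y(y₁,y₂) / e^{t₂}` shows that convergence of both coordinates implies
convergence for `hypDist`.
-/

open UpperHalfPlane

/-- The point `l + i·e^t` of the upper half-plane `ℍ` (with its hyperbolic metric of
constant curvature `-1`). -/
noncomputable def hypPoint (t l : ℝ) : UpperHalfPlane :=
  UpperHalfPlane.mk ⟨l, Real.exp t⟩ (by simpa using Real.exp_pos t)

/-- The hyperbolization distance on `X = ℝ × Y`: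
`d_X((t₁,y₁),(t₂,y₂)) = d_ℍ(i·e^{t₁}, d_Y(y₁,y₂) + i·e^{t₂})`. -/
noncomputable def hypDist (Y : Type*) [MetricSpace Y] (p q : ℝ × Y) : ℝ :=
  dist (hypPoint p.1 0) (hypPoint q.1 (dist p.2 q.2))

lemma hypPoint_im (t l : ℝ) : (hypPoint t l).im = Real.exp t := rfl

lemma hypPoint_re (t l : ℝ) : (hypPoint t l).re = l := rfl

lemma dist_coe_hypPoint_sq (s a t b : ℝ) :
    dist (hypPoint s a : ℂ) (hypPoint t b) ^ 2 =
      |a - b| ^ 2 + (Real.exp s - Real.exp t) ^ 2 := by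
  rw [Complex.dist_eq, Complex.sq_norm, Complex.normSq_apply, sq_abs]
  simp only [Complex.sub_re, Complex.sub_im, coe_re, coe_im, hypPoint_im, hypPoint_re]
  ring

lemma cosh_dist_hypPoint (s a t b : ℝ) :
    Real.cosh (dist (hypPoint s a) (hypPoint t b)) =
      1 + (|a - b| ^ 2 + (Real.exp s - Real.exp t) ^ 2) / (2 * Real.exp s * Real.exp t) := by
  rw [UpperHalfPlane.cosh_dist, dist_coe_hypPoint_sq, hypPoint_im, hypPoint_im]

/-- At fixed heights, the hyperbolic distance is nondecreasing in the horizontal separation. -/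
lemma dist_hypPoint_le {s t a b c d : ℝ} (h : |a - b| ≤ |c - d|) :
    dist (hypPoint s a) (hypPoint t b) ≤ dist (hypPoint s c) (hypPoint t d) := by
  rw [← abs_of_nonneg (dist_nonneg (x := hypPoint s a)),
    ← abs_of_nonneg (dist_nonneg (x := hypPoint s c)), ← Real.cosh_le_cosh,
    cosh_dist_hypPoint, cosh_dist_hypPoint]
  gcongr

lemma dist_hypPoint_congr {s t a b c d : ℝ} (h : |a - b| = |c - d|) :
    dist (hypPoint s a) (hypPoint t b) = dist (hypPoint s c) (hypPoint t d) :=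
  le_antisymm (dist_hypPoint_le h.le) (dist_hypPoint_le h.ge)

section

variable {Y : Type*} [MetricSpace Y]

lemma hypDist_self (p : ℝ × Y) : hypDist Y p p = 0 := by
  simp [hypDist]

lemma hypDist_comm (p q : ℝ × Y) : hypDist Y p q = hypDist Y q p := by
  unfold hypDist
  rw [dist_comm (hypPoint p.1 0), dist_comm p.2 q.2]
  exact dist_hypPoint_congr (by simp)

lemma hypDist_triangle (p q r : ℝ × Y) :
    hypDist Y p r ≤ hypDist Y p q + hypDist Y q r := by
  have h1 : hypDist Y p r ≤
      dist (hypPoint p.1 0) (hypPoint r.1 (dist p.2 q.2 + dist q.2 r.2)) := by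
    refine dist_hypPoint_le ?_
    rw [zero_sub, zero_sub, abs_neg, abs_neg]
    exact abs_le_abs_of_nonneg dist_nonneg (dist_triangle _ _ _)
  have h2 : hypDist Y q r =
      dist (hypPoint q.1 (dist p.2 q.2)) (hypPoint r.1 (dist p.2 q.2 + dist q.2 r.2)) :=
    dist_hypPoint_congr (by simp)
  rw [h2]
  exact h1.trans (dist_triangle _ _ _)

lemma eq_of_hypDist_eq_zero {p q : ℝ × Y} (h : hypDist Y p q = 0) : p = q := by
  have h := dist_eq_zero.1 h
  have h1 := congrArg UpperHalfPlane.im h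
  have h2 := congrArg UpperHalfPlane.re h
  rw [hypPoint_im, hypPoint_im] at h1
  rw [hypPoint_re, hypPoint_re] at h2
  exact Prod.ext (Real.exp_injective h1) (dist_eq_zero.1 h2.symm)

lemma dist_fst_le_hypDist (p q : ℝ × Y) : dist p.1 q.1 ≤ hypDist Y p q := by
  simpa [hypPoint_im, hypDist] using
    UpperHalfPlane.dist_log_im_le (hypPoint p.1 0) (hypPoint q.1 (dist p.2 q.2))

lemma dist_snd_le_hypDist (p q : ℝ × Y) :
    dist p.2 q.2 ≤ Real.exp q.1 * (Real.exp (hypDist Y p q) - 1) := by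
  refine le_trans ?_
    (UpperHalfPlane.dist_coe_le (hypPoint p.1 0) (hypPoint q.1 (dist p.2 q.2)))
  refine le_of_sq_le_sq ?_ dist_nonneg
  rw [dist_coe_hypPoint_sq, zero_sub, abs_neg, sq_abs]
  exact le_add_of_nonneg_right (sq_nonneg _)

lemma hypDist_le (p q : ℝ × Y) :
    hypDist Y p q ≤ dist p.1 q.1 + dist p.2 q.2 / Real.exp q.1 := by
  -- Move vertically first, then horizontally at height `e^{q.1}`.
  refine (dist_triangle _ (hypPoint q.1 0) _).trans (add_le_add ?_ ?_)
  · rw [UpperHalfPlane.dist_of_re_eq (by rfl)]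
    simp [hypPoint_im]
  · refine (UpperHalfPlane.dist_le_dist_coe_div_sqrt _ _).trans ?_
    rw [hypPoint_im, hypPoint_im, Real.sqrt_mul_self (Real.exp_pos _).le]
    gcongr
    refine le_of_sq_le_sq ?_ dist_nonneg
    rw [dist_coe_hypPoint_sq]
    simp

end

/-- The metric space structure on `ℝ × Y` with distance `hypDist Y`; a definition rather than an
instance, since `ℝ × Y` already carries the sup metric. -/
noncomputable abbrev hypMetric (Y : Type*) [MetricSpace Y] : MetricSpace (ℝ × Y) where
  dist := hypDist Y
  dist_self := hypDist_self
  dist_comm := hypDist_comm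
  dist_triangle := hypDist_triangle
  eq_of_dist_eq_zero := eq_of_hypDist_eq_zero

open Filter Topology in
/-- Sequential completeness of `hypDist`, stated with `ε` so as not to involve the uniform
structure that `ℝ × Y` already has. -/
lemma hypDist_complete {Y : Type*} [MetricSpace Y] [CompleteSpace Y] (u : ℕ → ℝ × Y)
    (hu : ∀ ε > 0, ∃ N, ∀ m ≥ N, ∀ n ≥ N, hypDist Y (u m) (u n) < ε) :
    ∃ x, Tendsto (fun n => hypDist Y (u n) x) atTop (𝓝 0) := by
  have ht : CauchySeq fun n => (u n).1 := by
    refine Metric.cauchySeq_iff.2 fun ε hε => ?_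
    obtain ⟨N, hN⟩ := hu ε hε
    exact ⟨N, fun m hm n hn => (dist_fst_le_hypDist _ _).trans_lt (hN m hm n hn)⟩
  obtain ⟨t, ht⟩ := cauchySeq_tendsto_of_complete ht
  obtain ⟨N₀, hN₀⟩ := eventually_atTop.1 (ht.eventually_lt_const (lt_add_one t))
  have hy : CauchySeq fun n => (u n).2 := by
    refine Metric.cauchySeq_iff.2 fun ε hε => ?_
    have hC := Real.exp_pos (t + 1)
    have hεC : 0 < ε / Real.exp (t + 1) := div_pos hε hC
    -- The threshold solves `e^{t+1} (exp δ - 1) = ε`.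
    obtain ⟨N, hN⟩ := hu (Real.log (1 + ε / Real.exp (t + 1))) (Real.log_pos (by linarith))
    refine ⟨max N N₀, fun m hm n hn => ?_⟩
    have h1 := hN m (le_of_max_le_left hm) n (le_of_max_le_left hn)
    rw [Real.lt_log_iff_exp_lt (by linarith)] at h1
    have h2 : Real.exp (u n).1 ≤ Real.exp (t + 1) :=
      Real.exp_le_exp.2 (hN₀ n (le_of_max_le_right hn)).le
    have h3 : 0 ≤ Real.exp (hypDist Y (u m) (u n)) - 1 :=
      sub_nonneg.2 (Real.one_le_exp dist_nonneg)
    calc dist (u m).2 (u n).2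
        ≤ Real.exp (u n).1 * (Real.exp (hypDist Y (u m) (u n)) - 1) := dist_snd_le_hypDist _ _
      _ ≤ Real.exp (t + 1) * (Real.exp (hypDist Y (u m) (u n)) - 1) := by gcongr
      _ < Real.exp (t + 1) * (ε / Real.exp (t + 1)) := by gcongr; linarith
      _ = ε := mul_div_cancel₀ _ hC.ne'
  obtain ⟨y, hy⟩ := cauchySeq_tendsto_of_complete hy
  refine ⟨(t, y), squeeze_zero (fun n => dist_nonneg) (fun n => hypDist_le _ _) ?_⟩
  simpa using (tendsto_iff_dist_tendsto_zero.1 ht).add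
    ((tendsto_iff_dist_tendsto_zero.1 hy).div_const (Real.exp t))

/-- `d_X` is a metric on `X = ℝ × Y`, and if `Y` is complete then `(X, d_X)` is a
complete metric space. -/
theorem hypDist_metricSpace (Y : Type*) [MetricSpace Y] :
    ∃ M : MetricSpace (ℝ × Y),
      (∀ p q : ℝ × Y, @dist _ M.toDist p q = hypDist Y p q) ∧
      (CompleteSpace Y → @CompleteSpace (ℝ × Y) M.toUniformSpace) := by
  refine ⟨hypMetric Y, fun p q => rfl, fun _ => ?_⟩
  refine @Metric.complete_of_cauchySeq_tendsto _ (hypMetric Y).toPseudoMetricSpace fun u hu => ?_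
  obtain ⟨x, hx⟩ := hypDist_complete u
    ((@Metric.cauchySeq_iff _ _ (hypMetric Y).toPseudoMetricSpace _ _ u).1 hu)
  exact ⟨x, (@tendsto_iff_dist_tendsto_zero _ _ (hypMetric Y).toPseudoMetricSpace _ _ _).2 hx⟩
end

section
/- Let m be a Radon measure on a metric space (X,d) and δ > 0 be such that I(x) = ∫_X e^{−δ d(x,y)} dm(y) is finite and positive for every x ∈ X, and for each x ∈ X let ν_x be the probability measure on X with density e^{−δ d(x,y)} / I(x) with respect to m (the pre-Patterson measure). Then there exists s0 > 0, depending only on δ, such that ‖ν_x − ν_{x'}‖ ≤ 3δ·d(x,x') whenever x, x' ∈ X satisfy d(x,x') ≤ s0. -/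
/-!
Put `r = δ d(x,x')`, `k = e^r`. By the triangle inequality the unnormalised measures
`E_x = e^{-δ d(x,·)} m` satisfy `E_x ≤ k E_x'` and `E_x' ≤ k E_x` on every measurable set.
Bounding `ν_x ≤ k² ν_x'` directly would only give a Lipschitz constant near `4δ`. Instead, splitting
the space as `A ∪ Aᶜ` and writing `p, q` (resp. `p', q'`) for the `E_x`- (resp. `E_x'`-) masses
of `A, Aᶜ`, one has `ν_x(A) - ν_x'(A) = (p q' - p' q) / ((p + q)(p' + q')) ≤ k - 1`
(`div_add_sub_div_add_le`). So both suprema in the total variation are at most `e^r - 1`, and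
`2(e^r - 1) ≤ 3r` as soon as `r ≤ 1/3`.
-/

open MeasureTheory Set ENNReal

/-- The pre-Patterson measure `ν_x`: the probability measure with density
`e^{-δ d(x,y)} / ∫ e^{-δ d(x,y')} dm(y')` with respect to `m`. -/
noncomputable def prePatterson {X : Type*} [MetricSpace X] [MeasurableSpace X]
    (m : Measure X) (δ : ℝ) (x : X) : Measure X :=
  m.withDensity fun y => ENNReal.ofReal (Real.exp (-δ * dist x y)) /
    (∫⁻ y', ENNReal.ofReal (Real.exp (-δ * dist x y')) ∂m)

/-- The mass of `A` under the unnormalised measure with density `e^{-δ d(x,·)}`; the mass of the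
whole space is the normalising constant of `prePatterson m δ x`. -/
noncomputable def expMass {X : Type*} [MetricSpace X] [MeasurableSpace X]
    (m : Measure X) (δ : ℝ) (x : X) (A : Set X) : ℝ≥0∞ :=
  ∫⁻ y in A, ENNReal.ofReal (Real.exp (-δ * dist x y)) ∂m

/-- The estimate for one set and its complement, with masses `p, q` and `p', q'`. Using both
hypotheses on the numerator `p q' - p' q` gives `k - 1`; only these two of the four possible
comparisons are needed. -/
lemma div_add_sub_div_add_le {p q p' q' k : ℝ} (hp : 0 ≤ p) (hq : 0 ≤ q) (hp' : 0 ≤ p')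
    (hq' : 0 ≤ q') (hk : 1 ≤ k) (h : 0 < p + q) (h' : 0 < p' + q') (h1 : p ≤ k * p')
    (h2 : q' ≤ k * q) : p / (p + q) - p' / (p' + q') ≤ k - 1 := by
  have a : p - p' ≤ (k - 1) * p := by
    rcases le_total k 2 with h2k | h2k
    · nlinarith [mul_le_mul_of_nonneg_left h1 (sub_nonneg.2 h2k),
        mul_nonneg hp' (sq_nonneg (k - 1))]
    · nlinarith
  have b : q' - q ≤ (k - 1) * q := by linarith
  rw [div_sub_div _ _ h.ne' h'.ne', div_le_iff₀ (mul_pos h h')]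
  have c : 0 ≤ (k - 1) * (p * p' + q * q') := mul_nonneg (by linarith) (by positivity)
  -- `p q' - p' q = (p - p') q' + p' (q' - q)`
  linarith [mul_le_mul_of_nonneg_right a hq', mul_le_mul_of_nonneg_left b hp']

section

variable {X : Type*} [MetricSpace X] [MeasurableSpace X] [BorelSpace X]
  (m : Measure X) (δ : ℝ)

lemma measurable_ofReal_exp_dist (x : X) :
    Measurable fun y => ENNReal.ofReal (Real.exp (-δ * dist x y)) :=
  Continuous.measurable (ENNReal.continuous_ofReal.comp (by fun_prop))

lemma expMass_le (hδ : 0 < δ) (x x' : X) (A : Set X) :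
    expMass m δ x A ≤ ENNReal.ofReal (Real.exp (δ * dist x x')) * expMass m δ x' A := by
  unfold expMass
  rw [← lintegral_const_mul _ (measurable_ofReal_exp_dist δ x')]
  refine lintegral_mono fun y => ?_
  rw [← ENNReal.ofReal_mul (Real.exp_pos _).le, ← Real.exp_add]
  refine ENNReal.ofReal_le_ofReal (Real.exp_le_exp.2 ?_)
  nlinarith [dist_triangle x' x y, dist_comm x x']

lemma prePatterson_apply (x : X) {A : Set X} (hA : MeasurableSet A) :
    prePatterson m δ x A = expMass m δ x A / expMass m δ x univ := by
  unfold prePatterson expMass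
  rw [withDensity_apply _ hA, Measure.restrict_univ]
  simp only [div_eq_mul_inv]
  rw [lintegral_mul_const _ (measurable_ofReal_exp_dist δ x)]

/-- One-sided comparison of `ν_x` and `ν_x'` on a single set. -/
lemma prePatterson_sub_le (hδ : 0 < δ)
    (hI : ∀ x, 0 < expMass m δ x univ ∧ expMass m δ x univ < ⊤)
    (x x' : X) {A : Set X} (hA : MeasurableSet A) :
    (prePatterson m δ x A).toReal - (prePatterson m δ x' A).toReal
      ≤ Real.exp (δ * dist x x') - 1 := by
  have fin : ∀ z B, expMass m δ z B ≠ ⊤ := fun z B =>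
    ne_top_of_le_ne_top (hI z).2.ne (lintegral_mono_set (subset_univ B))
  have hadd : ∀ z, (expMass m δ z univ).toReal
      = (expMass m δ z A).toReal + (expMass m δ z Aᶜ).toReal := fun z => by
    rw [← ENNReal.toReal_add (fin z A) (fin z Aᶜ)]
    simp only [expMass]
    rw [lintegral_add_compl _ hA, Measure.restrict_univ]
  have pos : ∀ z, 0 < (expMass m δ z A).toReal + (expMass m δ z Aᶜ).toReal := fun z =>
    hadd z ▸ ENNReal.toReal_pos (hI z).1.ne' (hI z).2.ne
  have comp : ∀ z w B, (expMass m δ z B).toReal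
      ≤ Real.exp (δ * dist z w) * (expMass m δ w B).toReal := fun z w B => by
    have := ENNReal.toReal_mono (ENNReal.mul_ne_top ENNReal.ofReal_ne_top (fin w B))
      (expMass_le m δ hδ z w B)
    rwa [ENNReal.toReal_mul, ENNReal.toReal_ofReal (Real.exp_pos _).le] at this
  rw [prePatterson_apply m δ x hA, prePatterson_apply m δ x' hA, ENNReal.toReal_div,
    ENNReal.toReal_div, hadd x, hadd x']
  exact div_add_sub_div_add_le toReal_nonneg toReal_nonneg toReal_nonneg toReal_nonneg
    (Real.one_le_exp (by positivity)) (pos x) (pos x') (comp x x' A)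
    (dist_comm x x' ▸ comp x' x Aᶜ)

end

/-- Local Lipschitz continuity of the pre-Patterson measures: there is `s₀ > 0`,
depending only on `δ`, with `‖ν_x - ν_{x'}‖ ≤ 3δ d(x,x')` whenever `d(x,x') ≤ s₀`. -/
theorem prePatterson_locally_lipschitz (δ : ℝ) (hδ : 0 < δ) :
    ∃ s₀ : ℝ, 0 < s₀ ∧
      ∀ (X : Type*) [MetricSpace X] [MeasurableSpace X] [BorelSpace X]
        (m : Measure X), IsRadon m →
        (∀ x : X, 0 < (∫⁻ y, ENNReal.ofReal (Real.exp (-δ * dist x y)) ∂m) ∧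
          (∫⁻ y, ENNReal.ofReal (Real.exp (-δ * dist x y)) ∂m) < ⊤) →
        ∀ x x' : X, dist x x' ≤ s₀ →
          tvDist (prePatterson m δ x) (prePatterson m δ x') ≤ 3 * δ * dist x x' := by
  refine ⟨1 / (3 * δ), by positivity, fun X _ _ _ m _ hI x x' hd => ?_⟩
  have hI' : ∀ x, 0 < expMass m δ x univ ∧ expMass m δ x univ < ⊤ := fun x => by
    simpa only [expMass, Measure.restrict_univ] using hI x
  have hr0 : 0 ≤ δ * dist x x' := by positivity
  have hr : δ * dist x x' ≤ 1 / 3 := by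
    calc δ * dist x x' ≤ δ * (1 / (3 * δ)) := by gcongr
      _ = 1 / 3 := by field_simp
  have hexp : Real.exp (δ * dist x x') - 1 ≤ 3 / 2 * (δ * dist x x') := by
    -- `e^r (1 - r) ≤ 1` follows from `1 - r ≤ e^{-r}`
    have h1 : Real.exp (δ * dist x x') * (1 - δ * dist x x') ≤ 1 := by
      calc _ ≤ Real.exp (δ * dist x x') * Real.exp (-(δ * dist x x')) := by
            gcongr; exact Real.one_sub_le_exp_neg _
        _ = 1 := by rw [← Real.exp_add, add_neg_cancel, Real.exp_zero]
    generalize Real.exp (δ * dist x x') = e at *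
    nlinarith
  have hC : 0 ≤ 3 / 2 * (δ * dist x x') := by positivity
  -- nonnegativity of the bound handles the empty inner supremum when `A` is not measurable
  have key : ∀ z w : X, dist z w = dist x x' →
      (⨆ (A : Set X) (_ : MeasurableSet A),
        ((prePatterson m δ z A).toReal - (prePatterson m δ w A).toReal))
        ≤ 3 / 2 * (δ * dist x x') := fun z w hzw =>
    Real.iSup_le (fun A => Real.iSup_le (fun hA =>
      (prePatterson_sub_le m δ hδ hI' z w hA).trans (hzw ▸ hexp)) hC) hC
  unfold tvDist
  linarith [key x x' rfl, key x' x (dist_comm _ _)]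
end
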